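/- The number of rooted planar maps with n edges is M_n = 2·3^n·(2n)!/((n+2)!·n!). -/

import Mathlib

/-- The number of cycles (including fixed points) of a permutation of `Fin m`. -/
def numCycles {m : ℕ} (f : Equiv.Perm (Fin m)) : ℕ :=
  m - f.cycleType.sum + f.cycleType.card

/-- A rooted (combinatorial, planar) map with `n` edges, encoded by a rotation
system on the `2n` darts (oriented edges): `σ` is the counterclockwise rotation
of darts around their tail vertex, `α` is the fixed-point-free involution pairing
the two darts of each edge, the group `⟨σ, α⟩` acts transitively on darts
(connectedness), Euler's formula `V - E + F = 2` holds (planarity, i.e. genus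
zero), and `root` is the distinguished root dart.  Vertices are the cycles of
`σ`, edges the cycles of `α`, faces the cycles of `σ * α`.  Isomorphism classes
of such structures (for `n ≥ 1`) are exactly rooted planar maps with `n` edges,
considered up to orientation-preserving homeomorphisms of the plane. -/
structure RMap (n : ℕ) where
  σ : Equiv.Perm (Fin (2 * n))
  α : Equiv.Perm (Fin (2 * n))
  root : Fin (2 * n)
  inv : ∀ d, α (α d) = d
  fpf : ∀ d, α d ≠ d
  conn : ∀ d e : Fin (2 * n),
    ∃ g ∈ Subgroup.closure ({σ, α} : Set (Equiv.Perm (Fin (2 * n)))), g d = e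
  euler : numCycles σ + numCycles (σ * α) = n + 2

/-- Root-preserving isomorphism of rooted maps: a relabelling of the darts
conjugating the rotation systems and preserving the root dart. -/
def RMapIso {n : ℕ} (M M' : RMap n) : Prop :=
  ∃ e : Equiv.Perm (Fin (2 * n)),
    (∀ d, e (M.σ d) = M'.σ (e d)) ∧ (∀ d, e (M.α d) = M'.α (e d)) ∧
      e M.root = M'.root

/-- The number of rooted planar maps with `n` edges: the number of isomorphism
classes of rooted map structures (with the convention that the trivial map is
the unique map with `0` edges). -/
noncomputable def mapCount (n : ℕ) : ℕ :=
  if n = 0 then 1 else Nat.card (Quot (@RMapIso n))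

/-- A rooted map is separable if its edge set can be partitioned into two
nonempty parts such that exactly one vertex is incident to edges of both parts.
Here an edge set is an `α`-invariant set `S` of darts, a vertex is a cycle of
`σ`, and a vertex is incident to an edge of `S` iff its `σ`-cycle meets `S`. -/
def RMap.Separable {n : ℕ} (M : RMap n) : Prop :=
  ∃ S : Finset (Fin (2 * n)), S.Nonempty ∧ Sᶜ.Nonempty ∧
    (∀ d ∈ S, M.α d ∈ S) ∧
    ∃ d₀ : Fin (2 * n),
      ((∃ a ∈ S, M.σ.SameCycle d₀ a) ∧ (∃ b ∈ Sᶜ, M.σ.SameCycle d₀ b)) ∧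
      ∀ d : Fin (2 * n), (∃ a ∈ S, M.σ.SameCycle d a) →
        (∃ b ∈ Sᶜ, M.σ.SameCycle d b) → M.σ.SameCycle d₀ d

/-- The number of rooted 2-connected (i.e. non-separable) planar maps with `k`
edges, with the convention `C 0 = 1`. -/
noncomputable def bconnCount (k : ℕ) : ℕ :=
  if k = 0 then 1
  else Nat.card (Quot (fun M M' : {M : RMap k // ¬ M.Separable} => RMapIso M.1 M'.1))

/-!
A map is a pair of permutations of its half-edges: the rotation `σ` at the vertices and the
involution `β` matching half-edges into edges. All counts are of labelled maps; since an
automorphism fixing the root of a connected map is trivial, dividing by `(2 * n)!` at the end gives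
the number of rooted maps.

Following Tutte, the root edge is deleted, that is, `β` is replaced by `β * swap s s'`, which leaves
the two ends of the edge as legs. If the edge is an isthmus, two planar maps with one leg each
remain. Otherwise one planar map remains, with both legs in the same face; it is determined by
a planar map with one leg and a corner of the face at this leg. When a face of degree `d` has weight
`(1 + X) ^ d`, the sum over its corners is the divided difference `divX`, and this gives a recursion
for a sequence of polynomials in `X`.

The generating series of these polynomials is the unique solution of a quadratic equation with
catalytic variable `X`. It is written down explicitly in terms of `a = 1 + 3 * z * a ^ 2`, the
Catalan series evaluated at `3 * z`, and its value at `X = 0` is `a - z * a ^ 3`.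
-/

namespace PlanarMap

open Equiv Equiv.Perm

/-! ### Orbits of sets of permutations -/

/-- The set `S` is a union of orbits of the group generated by `G`. -/
def IsStable {X : Type*} (G : Set (Perm X)) (S : Set X) : Prop :=
  ∀ g ∈ G, ∀ x, g x ∈ S ↔ x ∈ S

/-- The number of orbits of the group generated by `G`. For a single permutation this is its number
of cycles, fixed points included. -/
noncomputable def orbitCount {X : Type*} (G : Set (Perm X)) : ℕ :=
  Nat.card (MulAction.orbitRel.Quotient (Subgroup.closure G) X)

section Orbits

variable {X Y : Type*} {G G' : Set (Perm X)} {f g : Perm X} {S T : Set X} {x y : X}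

theorem isStable_singleton : IsStable {f} S ↔ ∀ x, f x ∈ S ↔ x ∈ S := by
  simp only [IsStable, Set.mem_singleton_iff, forall_eq]

theorem isStable_pair : IsStable {f, g} S ↔ IsStable {f} S ∧ IsStable {g} S := by
  simp only [IsStable, Set.mem_insert_iff, Set.mem_singleton_iff, forall_eq_or_imp, forall_eq]

theorem IsStable.compl (h : IsStable G S) : IsStable G Sᶜ :=
  fun g hg x => not_congr (h g hg x)

theorem IsStable.union (hS : IsStable G S) (hT : IsStable G T) : IsStable G (S ∪ T) :=
  fun g hg x => or_congr (hS g hg x) (hT g hg x)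

theorem IsStable.symmDiff (hS : IsStable G S) (hT : IsStable G T) :
    IsStable G (symmDiff S T) := fun g hg x => by
  simp only [Set.mem_symmDiff, hS g hg x, hT g hg x]

theorem IsStable.mul (hf : IsStable {f} S) (hg : IsStable {g} S) : IsStable {f * g} S := by
  rw [isStable_singleton] at *
  intro x
  rw [Perm.mul_apply, hf, hg]

theorem isStable_singleton_of_mapsTo [Finite X] (h : Set.MapsTo f S S) : IsStable {f} S := by
  have himg : f '' S = S :=
    Set.eq_of_subset_of_ncard_le h.image_subset (Set.ncard_image_of_injective S f.injective).ge
  refine isStable_singleton.2 fun x => ?_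
  conv_lhs => rw [← himg]
  exact f.injective.mem_set_image

theorem isStable_swap [DecidableEq X] : IsStable {swap x y} S ↔ (x ∈ S ↔ y ∈ S) := by
  rw [isStable_singleton]
  refine ⟨fun h => by simpa only [swap_apply_right] using h y, fun h z => ?_⟩
  rcases eq_or_ne z x with rfl | hx
  · rw [swap_apply_left, h]
  rcases eq_or_ne z y with rfl | hy
  · rw [swap_apply_right, h]
  rw [swap_apply_of_ne_of_ne hx hy]

theorem IsStable.closure_smul_mem_iff (hS : IsStable G S) (g : Subgroup.closure G) (x : X) :
    g • x ∈ S ↔ x ∈ S := by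
  obtain ⟨g, hg⟩ := g
  have hg : IsStable {g} S := by
    induction hg using Subgroup.closure_induction with
    | mem g hg => exact isStable_singleton.2 (hS g hg)
    | one => exact isStable_singleton.2 fun _ => Iff.rfl
    | mul g g' _ _ h h' => exact h.mul h'
    | inv g _ h =>
      rw [isStable_singleton] at *
      exact fun x => by rw [← h, ← Perm.mul_apply, mul_inv_cancel, Perm.one_apply]
  exact isStable_singleton.1 hg x

/-- Stable sets are the unions of orbits. -/
def stableSetEquiv (G : Set (Perm X)) :
    {S // IsStable G S} ≃ Set (MulAction.orbitRel.Quotient (Subgroup.closure G) X) where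
  toFun S := {q | Quotient.liftOn' q (· ∈ S.1) (by
    rintro _ y ⟨g, rfl⟩
    exact propext (S.2.closure_smul_mem_iff g y))}
  invFun T := ⟨{x | Quotient.mk'' x ∈ T}, fun g hg x => by
    have : (Quotient.mk'' (g x) : MulAction.orbitRel.Quotient (Subgroup.closure G) X) =
        Quotient.mk'' x := Quotient.sound' ⟨⟨g, Subgroup.subset_closure hg⟩, rfl⟩
    rw [Set.mem_ofPred_eq, Set.mem_ofPred_eq, this]⟩
  left_inv S := rfl
  right_inv T := by
    ext q
    induction q using Quotient.inductionOn'
    rfl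

theorem card_isStable [Finite X] (G : Set (Perm X)) :
    Nat.card {S // IsStable G S} = 2 ^ orbitCount G := by
  classical
  have := Fintype.ofFinite (MulAction.orbitRel.Quotient (Subgroup.closure G) X)
  rw [Nat.card_congr (stableSetEquiv G), Nat.card_eq_fintype_card, Fintype.card_set, orbitCount,
    Nat.card_eq_fintype_card]

theorem orbitCount_eq_of_stableEquiv [Finite X] [Finite Y] {H : Set (Perm Y)}
    (e : {S // IsStable G S} ≃ {S // IsStable H S}) : orbitCount G = orbitCount H :=
  Nat.pow_right_injective le_rfl (by simpa only [card_isStable] using Nat.card_congr e)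

theorem orbitCount_congr [Finite X] (h : ∀ S, IsStable G S ↔ IsStable G' S) :
    orbitCount G = orbitCount G' :=
  orbitCount_eq_of_stableEquiv (Equiv.subtypeEquivRight h)

/-- The hypothesis `h` says that `G'` generates the orbits of `G` with `x` and `y` identified. -/
theorem orbitCount_add_one_of_separated [Finite X]
    (h : ∀ S, IsStable G' S ↔ IsStable G S ∧ (x ∈ S ↔ y ∈ S)) (hT : IsStable G T)
    (hx : x ∈ T) (hy : y ∉ T) : orbitCount G' + 1 = orbitCount G := by
  classical
  have toggle (S : Set X) : (x ∈ symmDiff S T ↔ y ∈ symmDiff S T) ↔ ¬ (x ∈ S ↔ y ∈ S) := by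
    simp only [Set.mem_symmDiff, hx, hy]
    tauto
  have e : {S : {S // IsStable G S} // x ∈ S.1 ↔ y ∈ S.1} ≃
      {S : {S // IsStable G S} // ¬ (x ∈ S.1 ↔ y ∈ S.1)} :=
    Equiv.subtypeEquiv
      (Function.Involutive.toPerm (fun S => ⟨symmDiff S.1 T, S.2.symmDiff hT⟩) fun S =>
        Subtype.ext (symmDiff_symmDiff_cancel_right T S.1))
      fun S => by rw [← not_iff_not, not_not]; exact (toggle S).symm
  have e' : {S // IsStable G' S} ≃ {S : {S // IsStable G S} // x ∈ S.1 ↔ y ∈ S.1} :=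
    (Equiv.subtypeEquivRight h).trans (Equiv.subtypeSubtypeEquivSubtypeInter _ _).symm
  refine Nat.pow_right_injective le_rfl ?_
  simp only [pow_succ, ← card_isStable, mul_two]
  rw [← Nat.card_congr (Equiv.sumCompl fun S : {S // IsStable G S} => x ∈ S.1 ↔ y ∈ S.1),
    Nat.card_sum, ← Nat.card_congr e, Nat.card_congr e']

theorem orbitCount_eq_of_not_separated [Finite X]
    (h : ∀ S, IsStable G' S ↔ IsStable G S ∧ (x ∈ S ↔ y ∈ S))
    (hsep : ¬ ∃ T, IsStable G T ∧ x ∈ T ∧ y ∉ T) : orbitCount G' = orbitCount G := by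
  refine orbitCount_congr fun S => (h S).trans (and_iff_left_of_imp fun hS => ?_)
  push Not at hsep
  exact ⟨hsep S hS, fun hy => by_contra fun hx => hsep _ hS.compl hx hy⟩

theorem orbitCount_eq_one_iff_forall_exists [Nonempty X] :
    orbitCount G = 1 ↔ ∀ x y : X, ∃ g ∈ Subgroup.closure G, g x = y := by
  rw [orbitCount, Nat.card_eq_one_iff_unique, ← unique_iff_subsingleton_and_nonempty,
    ← MulAction.pretransitive_iff_unique_quotient_of_nonempty]
  refine ⟨fun h x y => ?_, fun h => ⟨fun x y => ?_⟩⟩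
  · obtain ⟨g, hg⟩ := h.exists_smul_eq x y
    exact ⟨g, g.2, hg⟩
  · obtain ⟨g, hg, hgx⟩ := h x y
    exact ⟨⟨g, hg⟩, hgx⟩

theorem IsStable.eq_univ_of_orbitCount_eq_one (hS : IsStable G S) (h : orbitCount G = 1)
    (hx : x ∈ S) : S = Set.univ := by
  have : Nonempty X := ⟨x⟩
  refine Set.eq_univ_of_forall fun y => ?_
  obtain ⟨g, hg, rfl⟩ := orbitCount_eq_one_iff_forall_exists.1 h x y
  exact (hS.closure_smul_mem_iff ⟨g, hg⟩ x).2 hx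

theorem orbitCount_pos [Finite X] [Nonempty X] (G : Set (Perm X)) : 0 < orbitCount G :=
  have : Nonempty (MulAction.orbitRel.Quotient (Subgroup.closure G) X) :=
    ‹Nonempty X›.map Quotient.mk''
  Nat.card_pos

theorem isStable_sameCycle (f : Perm X) (x : X) : IsStable {f} {y | SameCycle f x y} :=
  isStable_singleton.2 fun _ => sameCycle_apply_right

theorem IsStable.mem_iff_of_sameCycle (hS : IsStable {f} S) (h : SameCycle f x y) :
    x ∈ S ↔ y ∈ S := by
  obtain ⟨i, rfl⟩ := h
  exact (hS.closure_smul_mem_iff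
    ⟨f ^ i, zpow_mem (Subgroup.subset_closure (Set.mem_singleton f)) i⟩ x).symm

theorem sameCycle_iff_forall_isStable :
    SameCycle f x y ↔ ∀ S, IsStable {f} S → (x ∈ S → y ∈ S) :=
  ⟨fun h _ hS => (hS.mem_iff_of_sameCycle h).1,
    fun h => h _ (isStable_sameCycle f x) (SameCycle.refl f x)⟩

end Orbits

section Cycles

variable {X : Type*} {f σ β : Perm X} {x y : X}

theorem orbitCount_singleton (f : Perm X) :
    orbitCount {f} = Nat.card (Quotient (SameCycle.setoid f)) := by
  refine Nat.card_congr (Quotient.congrRight fun x y => ?_)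
  rw [← Subgroup.zpowers_eq_closure, MulAction.orbitRel_apply]
  constructor
  · rintro ⟨⟨_, i, rfl⟩, rfl⟩
    exact SameCycle.symm ⟨i, rfl⟩
  · rintro ⟨i, rfl⟩
    exact ⟨⟨_, -i, rfl⟩, by simp [Subgroup.smul_def]⟩

/-- Each orbit is either a fixed point or the support of a nontrivial cycle. -/
theorem orbitCount_singleton_add_sum_cycleType [Fintype X] [DecidableEq X] (f : Perm X) :
    orbitCount {f} + f.cycleType.sum = Fintype.card X + f.cycleType.card := by
  have hcyc (c : f.cycleFactorsFinset) : c.1.support.Nonempty :=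
    (mem_cycleFactorsFinset_iff.1 c.2).1.nonempty_support
  choose x hx using hcyc
  have hcycleOf (c) : f.cycleOf (x c) = c := (cycle_is_cycleOf (hx c) c.2).symm
  have hmoved (c) : f (x c) ≠ x c := mem_support.1 (mem_cycleFactorsFinset_support_le c.2 (hx c))
  have hbij : Function.Bijective (Sum.elim (fun y : Function.fixedPoints f =>
      (⟦y.1⟧ : Quotient (SameCycle.setoid f))) fun c : f.cycleFactorsFinset => ⟦x c⟧) := by
    constructor
    · rintro (⟨y, hy⟩ | c) (⟨z, hz⟩ | d) h <;> have h : SameCycle f _ _ := Quotient.exact h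
      · exact congrArg Sum.inl (Subtype.ext (h.eq_of_left hy))
      · exact absurd (h.apply_eq_self_iff.1 hy) (hmoved d)
      · exact absurd (h.apply_eq_self_iff.2 hz) (hmoved c)
      · rw [Sum.inr.injEq, Subtype.ext_iff, ← hcycleOf, ← hcycleOf, h.cycleOf_eq]
    · rintro ⟨y⟩
      by_cases hy : f y = y
      · exact ⟨Sum.inl ⟨y, hy⟩, rfl⟩
      · have hc : f.cycleOf y ∈ f.cycleFactorsFinset :=
          cycleOf_mem_cycleFactorsFinset_iff.2 (mem_support.2 hy)
        have := hx ⟨_, hc⟩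
        rw [mem_support_cycleOf_iff] at this
        exact ⟨Sum.inr ⟨_, hc⟩, Quotient.sound this.1.symm⟩
  rw [orbitCount_singleton, ← Nat.card_congr (Equiv.ofBijective _ hbij), Nat.card_sum,
    Nat.card_eq_fintype_card, card_fixedPoints, Nat.card_eq_fintype_card, Fintype.card_coe,
    cycleType_def, Multiset.card_map, Finset.card_val]
  have := sum_cycleType f ▸ Finset.card_le_univ f.support
  rw [← cycleType_def] at *
  omega

theorem sign_eq_neg_one_pow_orbitCount [Fintype X] [DecidableEq X] (f : Perm X) :
    sign f = (-1) ^ (Fintype.card X + orbitCount {f}) := by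
  rw [sign_of_cycleType, neg_one_pow_congr]
  have := orbitCount_singleton_add_sum_cycleType f
  grind

theorem two_mul_orbitCount_of_involutive [Finite X] (hβ : Function.Involutive β) :
    2 * orbitCount {β} = Nat.card X + (Function.fixedPoints β).ncard := by
  classical
  have := Fintype.ofFinite X
  have hsum : β.cycleType.sum = 2 * β.cycleType.card := by
    have hβ : β ^ 2 = 1 := Perm.ext fun x => by rw [sq, Perm.mul_apply, hβ x, Perm.one_apply]
    rw [cycleType_of_pow_prime_eq_one hβ, Multiset.sum_replicate, Multiset.card_replicate,
      smul_eq_mul, mul_comm]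
  have hfixed := card_fixedPoints β
  have hle := sum_cycleType β ▸ Finset.card_le_univ β.support
  have := orbitCount_singleton_add_sum_cycleType β
  rw [Nat.card_eq_fintype_card, ← Nat.card_coe_set_eq, Nat.card_eq_fintype_card]
  omega

variable [DecidableEq X]

theorem mul_swap_mul_swap (f : Perm X) (x y : X) : f * swap x y * swap x y = f := by
  rw [mul_assoc, swap_mul_self, mul_one]

variable [Finite X]

theorem isStable_mul_swap_iff (hxy : ¬ SameCycle f x y) (S : Set X) :
    IsStable {f * swap x y} S ↔ IsStable {f} S ∧ (x ∈ S ↔ y ∈ S) := by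
  refine ⟨fun h => ?_, fun h => h.1.mul (isStable_swap.2 h.2)⟩
  have mem_of_mem {x y : X} (hxy : ¬ SameCycle f x y) (h : IsStable {f * swap x y} S)
      (hx : x ∈ S) : y ∈ S := by
    by_contra hy
    rw [isStable_singleton] at h
    have hT : IsStable {f} (S ∩ {z | SameCycle f y z}) := by
      refine isStable_singleton_of_mapsTo fun z ⟨hz, hyz⟩ => ⟨?_, sameCycle_apply_right.2 hyz⟩
      have hzx : z ≠ x := fun h => hxy (h ▸ SameCycle.symm hyz)
      have hzy : z ≠ y := fun h => hy (h ▸ hz)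
      have := (h z).2 hz
      rwa [Perm.mul_apply, swap_apply_of_ne_of_ne hzx hzy] at this
    have hfy : f y ∈ S := by simpa using (h x).2 hx
    exact hy ((isStable_singleton.1 hT y).1
      ⟨hfy, sameCycle_apply_right.2 (SameCycle.refl f y)⟩).1
  have hiff : x ∈ S ↔ y ∈ S :=
    ⟨mem_of_mem hxy h, mem_of_mem (fun h' => hxy h'.symm) (by rwa [swap_comm])⟩
  exact ⟨mul_swap_mul_swap f x y ▸ h.mul (isStable_swap.2 hiff), hiff⟩

theorem orbitCount_mul_swap_add_one (hxy : ¬ SameCycle f x y) :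
    orbitCount {f * swap x y} + 1 = orbitCount {f} :=
  orbitCount_add_one_of_separated (isStable_mul_swap_iff hxy) (isStable_sameCycle f x)
    (SameCycle.refl f x) hxy

/-- Otherwise `f` and `f * swap x y` would have the same orbits, hence the same sign. -/
theorem not_sameCycle_mul_swap_of_sameCycle (hne : x ≠ y) (hxy : SameCycle f x y) :
    ¬ SameCycle (f * swap x y) x y := by
  intro h
  have := Fintype.ofFinite X
  have horbit : orbitCount {f * swap x y} = orbitCount {f} := orbitCount_congr fun S => by
    refine ⟨fun hS => ?_, fun hS => hS.mul (isStable_swap.2 (hS.mem_iff_of_sameCycle hxy))⟩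
    exact mul_swap_mul_swap f x y ▸ hS.mul (isStable_swap.2 (hS.mem_iff_of_sameCycle h))
  have hsign : sign (f * swap x y) = sign f := by
    rw [sign_eq_neg_one_pow_orbitCount, horbit, ← sign_eq_neg_one_pow_orbitCount]
  rw [Perm.sign_mul, sign_swap hne, mul_neg_one] at hsign
  exact units_ne_neg_self _ hsign.symm

theorem orbitCount_mul_swap_of_sameCycle (hne : x ≠ y) (hxy : SameCycle f x y) :
    orbitCount {f * swap x y} = orbitCount {f} + 1 := by
  rw [← orbitCount_mul_swap_add_one (not_sameCycle_mul_swap_of_sameCycle hne hxy),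
    mul_swap_mul_swap]

theorem orbitCount_mul_swap_le (f : Perm X) (x y : X) :
    orbitCount {f * swap x y} ≤ orbitCount {f} + 1 := by
  rcases eq_or_ne x y with rfl | hne
  · rw [swap_self, ← Perm.one_def, mul_one]
    exact Nat.le_succ _
  by_cases h : SameCycle f x y
  · exact (orbitCount_mul_swap_of_sameCycle hne h).le
  · have := orbitCount_mul_swap_add_one h
    omega

theorem isStable_pair_mul_swap_iff (hxy : ¬ SameCycle β x y) (S : Set X) :
    IsStable {σ, β * swap x y} S ↔ IsStable {σ, β} S ∧ (x ∈ S ↔ y ∈ S) := by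
  rw [isStable_pair, isStable_mul_swap_iff hxy, ← and_assoc, ← isStable_pair]

theorem genus_nonneg_mul_swap (hxy : ¬ SameCycle β x y)
    (h : orbitCount {σ} + orbitCount {β} + orbitCount {σ * β} ≤
      Nat.card X + 2 * orbitCount {σ, β}) :
    orbitCount {σ} + orbitCount {β * swap x y} + orbitCount {σ * (β * swap x y)} ≤
      Nat.card X + 2 * orbitCount {σ, β * swap x y} := by
  have hβ := orbitCount_mul_swap_add_one hxy
  rw [← mul_assoc]
  by_cases hsep : ∃ T, IsStable {σ, β} T ∧ x ∈ T ∧ y ∉ T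
  · obtain ⟨T, hT, hxT, hyT⟩ := hsep
    have hpair := orbitCount_add_one_of_separated (isStable_pair_mul_swap_iff hxy) hT hxT hyT
    have hT' : IsStable {σ * β} T := (isStable_pair.1 hT).1.mul (isStable_pair.1 hT).2
    have hprod := orbitCount_mul_swap_add_one (f := σ * β) (x := x) (y := y)
      fun h => hyT ((hT'.mem_iff_of_sameCycle h).1 hxT)
    omega
  · have hpair := orbitCount_eq_of_not_separated (isStable_pair_mul_swap_iff hxy) hsep
    have hprod := orbitCount_mul_swap_le (σ * β) x y
    omega

omit [DecidableEq X] in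
/-- The genus of a hypermap is nonnegative. -/
theorem orbitCount_add_orbitCount_add_orbitCount_mul_le (σ β : Perm X) :
    orbitCount {σ} + orbitCount {β} + orbitCount {σ * β} ≤
      Nat.card X + 2 * orbitCount {σ, β} := by
  classical
  have := Fintype.ofFinite X
  induction hn : β.support.card using Nat.strong_induction_on generalizing β with
  | _ n ih =>
  rcases eq_or_ne β 1 with rfl | hβ
  · have hpair : orbitCount {σ, (1 : Perm X)} = orbitCount {σ} := orbitCount_congr fun S => by
      rw [isStable_pair]
      exact and_iff_left (isStable_singleton.2 fun _ => Iff.rfl)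
    have hone := orbitCount_singleton_add_sum_cycleType (1 : Perm X)
    rw [cycleType_one, Multiset.sum_zero, Multiset.card_zero] at hone
    rw [hpair, mul_one, Nat.card_eq_fintype_card]
    omega
  obtain ⟨x, hx⟩ : ∃ x, β x ≠ x := not_forall.1 fun h => hβ (Perm.ext h)
  have hsupport : (β * swap x (β x)).support.card < n := by
    rw [mul_swap_eq_swap_mul, ← hn]
    exact card_support_swap_mul fun h => hx (β.injective h)
  have hcycle : ¬ SameCycle (β * swap x (β x)) x (β x) := fun h =>
    hx (h.eq_of_right (by simp [Function.IsFixedPt])).symm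
  simpa only [mul_swap_mul_swap] using genus_nonneg_mul_swap hcycle (ih _ hsupport _ rfl)

end Cycles

/-! ### Insertion of a point into a cycle -/

section CycleLength

open Function

variable {X Y : Type*}

theorem minimalPeriod_eq_of_semiconj {f : X → X} {g : Y → Y} {i : X → Y} (hi : Injective i)
    (h : Semiconj i f g) (x : X) : minimalPeriod g (i x) = minimalPeriod f x := by
  refine minimalPeriod_eq_minimalPeriod_iff.2 fun n => ?_
  rw [IsPeriodicPt, IsFixedPt, ← (h.iterate_right n).eq, hi.eq_iff, IsPeriodicPt, IsFixedPt]

variable [Finite X]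

theorem minimalPeriod_perm_pos (f : Perm X) (x : X) : 0 < minimalPeriod f x :=
  minimalPeriod_pos_of_mem_periodicPts (f.injective.mem_periodicPts x)

theorem minimalPeriod_eq_ncard (f : Perm X) (x : X) :
    minimalPeriod f x = {y | SameCycle f x y}.ncard := by
  have := Fintype.ofFinite (MulAction.orbit (Subgroup.zpowers f) x)
  have horbit : MulAction.orbit (Subgroup.zpowers f) x = {y | SameCycle f x y} := by
    ext y
    constructor
    · rintro ⟨⟨_, i, rfl⟩, rfl⟩
      exact ⟨i, rfl⟩
    · rintro ⟨i, rfl⟩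
      exact ⟨⟨_, i, rfl⟩, rfl⟩
  have := MulAction.minimalPeriod_eq_card (a := f) (b := x)
  rw [← Nat.card_eq_fintype_card, Nat.card_coe_set_eq, horbit] at this
  exact this

theorem exists_iterate_eq_of_sameCycle {f : Perm X} {x y : X} (h : SameCycle f x y) :
    ∃ i < minimalPeriod f x, f^[i] x = y := by
  obtain ⟨n, hn⟩ := h.exists_nat_pow_eq
  refine ⟨n % minimalPeriod f x, Nat.mod_lt _ (minimalPeriod_perm_pos f x), ?_⟩
  rw [iterate_mod_minimalPeriod_eq, Perm.iterate_eq_pow, hn]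

theorem minimalPeriod_mul_swap [DecidableEq X] {f : Perm X} {x y : X}
    (hxy : ¬ SameCycle f x y) :
    minimalPeriod (f * swap x y) x = minimalPeriod f x + minimalPeriod f y := by
  have hdisj : Disjoint {z | SameCycle f x z} {z | SameCycle f y z} :=
    Set.disjoint_left.2 fun _ hx hy => hxy (SameCycle.trans hx (SameCycle.symm hy))
  simp only [minimalPeriod_eq_ncard]
  rw [← Set.ncard_union_eq hdisj]
  congr 1
  refine subset_antisymm (fun z hz => ?_) (fun z hz => ?_)
  · refine sameCycle_iff_forall_isStable.1 hz _ ((isStable_mul_swap_iff hxy _).2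
      ⟨(isStable_sameCycle f x).union (isStable_sameCycle f y), ?_⟩) (Or.inl (SameCycle.refl f x))
    exact iff_of_true (Or.inl (SameCycle.refl f x)) (Or.inr (SameCycle.refl f y))
  · have hg := (isStable_mul_swap_iff hxy _).1 (isStable_sameCycle (f * swap x y) x)
    rcases hz with hz | hz
    · exact (hg.1.mem_iff_of_sameCycle hz).1 (SameCycle.refl _ x)
    · exact (hg.1.mem_iff_of_sameCycle hz).1 (hg.2.1 (SameCycle.refl _ x))

end CycleLength

section InsertBefore

open Function

variable {D : Type*}

theorem optionCongr_mul (f g : Perm D) : optionCongr f * optionCongr g = optionCongr (f * g) :=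
  (optionCongr_trans g f).symm

theorem eq_optionCongr_removeNone {f : Perm (Option D)} (h : f none = none) :
    f = optionCongr (removeNone f) := by
  classical
  have := decomposeOption.symm_apply_apply f
  rwa [decomposeOption_apply, decomposeOption_symm_apply, h, swap_self, ← Perm.one_def,
    one_mul, eq_comm] at this

theorem isStable_optionCongr {f : Perm D} {S : Set (Option D)} :
    IsStable {optionCongr f} S ↔ IsStable {f} (some ⁻¹' S) := by
  simp [isStable_singleton, Option.forall]

theorem not_sameCycle_optionCongr_none (f : Perm D) (x : D) :
    ¬ SameCycle (optionCongr f) none (some x) := fun h =>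
  Option.some_ne_none x (h.eq_of_left (optionCongr_apply f none)).symm

theorem orbitCount_eq_of_isStable_iff_some [Finite D] {s : D} {G : Set (Perm (Option D))}
    {G' : Set (Perm D)}
    (h : ∀ S, IsStable G S ↔ IsStable G' (some ⁻¹' S) ∧ (none ∈ S ↔ some s ∈ S)) :
    orbitCount G = orbitCount G' :=
  orbitCount_eq_of_stableEquiv
    { toFun := fun S => ⟨some ⁻¹' S.1, ((h _).1 S.2).1⟩
      invFun := fun T => ⟨{x | x.getD s ∈ T.1}, (h _).2 ⟨T.2, Iff.rfl⟩⟩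
      left_inv := fun S => by
        ext x
        cases x
        · exact ((h _).1 S.2).2.symm
        · exact Iff.rfl
      right_inv := fun T => rfl }

variable [DecidableEq D]

/-- The permutation of `Option D` obtained from `f` by inserting the new point `none` into the cycle
of `s`, just before `s`. -/
def insertBefore (s : D) (f : Perm D) : Perm (Option D) :=
  swap none (some s) * optionCongr f

theorem insertBefore_none (s : D) (f : Perm D) : insertBefore s f none = some s := by
  simp [insertBefore]

theorem insertBefore_some_of_ne {s : D} {f : Perm D} {x : D} (h : f x ≠ s) :
    insertBefore s f (some x) = some (f x) := by
  simp [insertBefore, swap_apply_of_ne_of_ne, h]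

theorem insertBefore_mul_optionCongr (s : D) (f g : Perm D) :
    insertBefore s f * optionCongr g = insertBefore s (f * g) := by
  rw [insertBefore, insertBefore, mul_assoc, optionCongr_mul]

theorem insertBefore_eq_optionCongr_mul_swap (s : D) (f : Perm D) :
    insertBefore s f = optionCongr f * swap none (some (f.symm s)) := by
  rw [insertBefore, mul_swap_eq_swap_mul]
  simp

theorem insertBefore_eq_decomposeOption_symm (s : D) (f : Perm D) :
    insertBefore s f = decomposeOption.symm (some s, f) := by
  rw [decomposeOption_symm_apply, insertBefore]

theorem insertBefore_inj {s t : D} {f g : Perm D} :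
    insertBefore s f = insertBefore t g ↔ s = t ∧ f = g := by
  rw [insertBefore_eq_decomposeOption_symm, insertBefore_eq_decomposeOption_symm,
    decomposeOption.symm.apply_eq_iff_eq, Prod.mk.injEq, Option.some_inj]

theorem exists_eq_insertBefore {f : Perm (Option D)} (h : f none ≠ none) :
    ∃ s g, f = insertBefore s g := by
  obtain ⟨s, hs⟩ := Option.ne_none_iff_exists'.1 h
  refine ⟨s, removeNone f, ?_⟩
  rw [insertBefore_eq_decomposeOption_symm, ← hs, ← decomposeOption_apply, symm_apply_apply]

variable [Finite D]

theorem isStable_insertBefore {s : D} {f : Perm D} {S : Set (Option D)} :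
    IsStable {insertBefore s f} S ↔ IsStable {f} (some ⁻¹' S) ∧ (none ∈ S ↔ some s ∈ S) := by
  rw [insertBefore_eq_optionCongr_mul_swap,
    isStable_mul_swap_iff (not_sameCycle_optionCongr_none f _), isStable_optionCongr]
  refine and_congr_right fun h => ?_
  have := isStable_singleton.1 h (f.symm s)
  rw [apply_symm_apply, Set.mem_preimage, Set.mem_preimage] at this
  rw [this]

theorem orbitCount_insertBefore (s : D) (f : Perm D) :
    orbitCount {insertBefore s f} = orbitCount {f} :=
  orbitCount_eq_of_isStable_iff_some fun _ => isStable_insertBefore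

theorem orbitCount_insertBefore_pair (s : D) (f g : Perm D) :
    orbitCount {insertBefore s f, optionCongr g} = orbitCount {f, g} :=
  orbitCount_eq_of_isStable_iff_some fun S => by
    rw [isStable_pair, isStable_insertBefore, isStable_optionCongr, isStable_pair]
    tauto

omit [DecidableEq D] in
theorem orbitCount_optionCongr [Nonempty D] (f : Perm D) :
    orbitCount {optionCongr f} = orbitCount {f} + 1 := by
  classical
  have s := Classical.arbitrary D
  rw [← orbitCount_mul_swap_add_one (not_sameCycle_optionCongr_none f (f.symm s)),
    ← insertBefore_eq_optionCongr_mul_swap, orbitCount_insertBefore]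

theorem minimalPeriod_insertBefore_none (s : D) (f : Perm D) :
    minimalPeriod (insertBefore s f) none = minimalPeriod f s + 1 := by
  have hsemi (f : Perm D) : Semiconj some f (optionCongr f) := fun _ => rfl
  have hnone : minimalPeriod (optionCongr f) none = 1 :=
    minimalPeriod_eq_one_iff_isFixedPt.2 (optionCongr_apply f none)
  have hinv : minimalPeriod f (f.symm s) = minimalPeriod f s := by
    conv_rhs => rw [← apply_symm_apply f s]
    exact (minimalPeriod_apply (f.injective.mem_periodicPts _)).symm
  rw [insertBefore_eq_optionCongr_mul_swap,
    minimalPeriod_mul_swap (not_sameCycle_optionCongr_none f _), hnone,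
    minimalPeriod_eq_of_semiconj (Option.some_injective D) (hsemi f), hinv, add_comm]

theorem sameCycle_insertBefore_none_some_iff {s e : D} {f : Perm D} :
    SameCycle (insertBefore s f) none (some e) ↔ SameCycle f s e := by
  simp only [sameCycle_iff_forall_isStable, isStable_insertBefore]
  constructor
  · intro h S hS hs
    exact h {x | x.getD s ∈ S} ⟨hS, Iff.rfl⟩ hs
  · rintro h S ⟨hS, hsS⟩ hnone
    exact h _ hS (hsS.1 hnone)

omit [Finite D]
variable {t e : D} {f : Perm D} {i : ℕ}

theorem iterate_insertBefore_mul_swap (hi : i < minimalPeriod f t) (he : f^[i] t = e) {j : ℕ}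
    (hj : j ≤ i) :
    (insertBefore t f * swap none (some e))^[j + 1] (some e) = some (f^[j] t) := by
  induction j with
  | zero => simp [insertBefore_none]
  | succ j ih =>
    have hne : f (f^[j] t) ≠ t := by
      rw [← iterate_succ_apply' f]
      exact not_isPeriodicPt_of_pos_of_lt_minimalPeriod j.succ_ne_zero (by omega)
    have hne' : f^[j] t ≠ e := by
      rw [← he, Ne, iterate_eq_iterate_iff_of_lt_minimalPeriod (by omega) hi]
      omega
    rw [iterate_succ_apply', ih (by omega), Perm.mul_apply,
      swap_apply_of_ne_of_ne (Option.some_ne_none _) ((Option.some_injective D).ne hne'),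
      insertBefore_some_of_ne hne, ← iterate_succ_apply' f]

/-- The swap cuts the part from `t` to `e` out of the cycle of `f`. -/
theorem minimalPeriod_insertBefore_mul_swap (hi : i < minimalPeriod f t) (he : f^[i] t = e) :
    minimalPeriod (insertBefore t f * swap none (some e)) (some e) = i + 1 := by
  have hper : IsPeriodicPt (insertBefore t f * swap none (some e)) (i + 1) (some e) := by
    rw [IsPeriodicPt, IsFixedPt, iterate_insertBefore_mul_swap hi he le_rfl, he]
  refine le_antisymm (hper.minimalPeriod_le i.succ_pos) (not_lt.1 fun hlt => ?_)
  obtain ⟨j, hj⟩ := Nat.exists_eq_add_one.2 (hper.minimalPeriod_pos i.succ_pos)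
  have hreturn := isPeriodicPt_minimalPeriod (insertBefore t f * swap none (some e)) (some e)
  rw [hj, IsPeriodicPt, IsFixedPt, iterate_insertBefore_mul_swap hi he (by omega), ← he,
    Option.some_inj, iterate_eq_iterate_iff_of_lt_minimalPeriod (by omega) hi] at hreturn
  omega

end InsertBefore

/-! ### Planar hypermaps -/

/-- The pair `(σ, β)` is a planar hypermap: the group generated by `σ` and `β` is transitive and the
genus, as given by Euler's formula, is zero. If `β` is an involution, this is a planar map with
rotation system `σ`, whose edges are the transpositions of `β` and whose faces are the cycles of
`σ * β`. -/
structure IsPlanar {X : Type*} (σ β : Perm X) : Prop where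
  connected : orbitCount {σ, β} = 1
  euler : orbitCount {σ} + orbitCount {β} + orbitCount {σ * β} = Nat.card X + 2

section Planar

variable {X D : Type*}

theorem isPlanar_of_subsingleton [Subsingleton X] [Nonempty X] (σ β : Perm X) :
    IsPlanar σ β := by
  have hone (G : Set (Perm X)) : orbitCount G = 1 :=
    orbitCount_eq_one_iff_forall_exists.2 fun x y => ⟨1, one_mem _, Subsingleton.elim _ _⟩
  have : Unique X := uniqueOfSubsingleton (Classical.arbitrary X)
  exact ⟨hone _, by rw [hone, hone, hone, Nat.card_unique]⟩

theorem isPlanar_insertBefore [Finite D] [DecidableEq D] {s : D} {σ β : Perm D} :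
    IsPlanar (insertBefore s σ) (optionCongr β) ↔ IsPlanar σ β := by
  have : Nonempty D := ⟨s⟩
  have hpair := orbitCount_insertBefore_pair s σ β
  have hσ := orbitCount_insertBefore s σ
  have hβ := orbitCount_optionCongr β
  have hφ := orbitCount_insertBefore s (σ * β)
  rw [← insertBefore_mul_optionCongr] at hφ
  have hcard := Finite.card_option (α := D)
  exact ⟨fun ⟨h, h'⟩ => ⟨by omega, by omega⟩, fun ⟨h, h'⟩ => ⟨by omega, by omega⟩⟩

theorem exists_eq_insertBefore_of_connected [Nonempty D] [DecidableEq D] {σ β : Perm (Option D)}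
    (h : orbitCount {σ, β} = 1) (hβ : β none = none) :
    ∃ s σ' β', σ = insertBefore s σ' ∧ β = optionCongr β' := by
  have hσ : σ none ≠ none := fun hσ => by
    have hstable : IsStable {σ, β} {none} := isStable_pair.2 ⟨
      isStable_singleton.2 fun x => by
        simpa only [hσ, Set.mem_singleton_iff] using σ.injective.eq_iff (a := x) (b := none),
      isStable_singleton.2 fun x => by
        simpa only [hβ, Set.mem_singleton_iff] using β.injective.eq_iff (a := x) (b := none)⟩
    have := hstable.eq_univ_of_orbitCount_eq_one h rfl ▸ Set.mem_univ (some (Classical.arbitrary D))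
    exact Option.some_ne_none _ this
  obtain ⟨s, σ', rfl⟩ := exists_eq_insertBefore hσ
  exact ⟨s, σ', removeNone β, rfl, eq_optionCongr_removeNone hβ⟩

variable [Finite X] [DecidableEq X] {σ β : Perm X} {s s' : X}

/-- If `s` and `s'` lie on different faces, then joining them adds a handle. -/
theorem isPlanar_mul_swap_iff (hconn : orbitCount {σ, β} = 1) (hβ : ¬ SameCycle β s s') :
    IsPlanar σ (β * swap s s') ↔ IsPlanar σ β ∧ SameCycle (σ * β) s s' := by
  have : Nonempty X := ⟨s⟩
  have hne : s ≠ s' := fun h => hβ (h ▸ SameCycle.refl β s)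
  have hconn' : orbitCount {σ, β * swap s s'} = 1 := by
    rw [← hconn]
    refine orbitCount_eq_of_not_separated (isStable_pair_mul_swap_iff hβ) ?_
    rintro ⟨T, hT, hs, hs'⟩
    exact hs' (hT.eq_univ_of_orbitCount_eq_one hconn hs ▸ Set.mem_univ s')
  have hβ' := orbitCount_mul_swap_add_one hβ
  have hgenus := orbitCount_add_orbitCount_add_orbitCount_mul_le σ β
  by_cases hφ : SameCycle (σ * β) s s'
  · have hφ' := orbitCount_mul_swap_of_sameCycle hne hφ
    rw [mul_assoc] at hφ'
    exact ⟨fun h => ⟨⟨hconn, by have := h.euler; omega⟩, hφ⟩,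
      fun h => ⟨hconn', by have := h.1.euler; omega⟩⟩
  · have hφ' := orbitCount_mul_swap_add_one hφ
    rw [mul_assoc] at hφ'
    exact ⟨fun h => by have := h.euler; omega, fun h => absurd h.2 hφ⟩

end Planar

section SubtypeCongr

open Function

variable {X : Type*} {P : X → Prop}

theorem involutive_iff_mul_self {f : Perm X} : Involutive f ↔ f * f = 1 :=
  ⟨fun h => Perm.ext h, fun h => Perm.ext_iff.1 h⟩

theorem orbitCount_eq_add [Finite X] {G : Set (Perm X)} {G₁ : Set (Perm {x // P x})}
    {G₂ : Set (Perm {x // ¬ P x})}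
    (h : ∀ S, IsStable G S ↔ IsStable G₁ (Subtype.val ⁻¹' S) ∧ IsStable G₂ (Subtype.val ⁻¹' S)) :
    orbitCount G = orbitCount G₁ + orbitCount G₂ := by
  refine Nat.pow_right_injective le_rfl ?_
  simp only [pow_add, ← card_isStable]
  rw [← Nat.card_prod]
  have val_preimage_left (S : Set {x // P x}) (T : Set {x // ¬ P x}) :
      Subtype.val ⁻¹' (Subtype.val '' S ∪ Subtype.val '' T) = S := by
    ext ⟨x, hx⟩
    simp [hx]
  have val_preimage_right (S : Set {x // P x}) (T : Set {x // ¬ P x}) :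
      Subtype.val ⁻¹' (Subtype.val '' S ∪ Subtype.val '' T) = T := by
    ext ⟨x, hx⟩
    simp [hx]
  exact Nat.card_congr
    { toFun := fun S => (⟨Subtype.val ⁻¹' S.1, ((h _).1 S.2).1⟩,
        ⟨Subtype.val ⁻¹' S.1, ((h _).1 S.2).2⟩)
      invFun := fun S => ⟨Subtype.val '' S.1.1 ∪ Subtype.val '' S.2.1, (h _).2 (by
        rw [val_preimage_left, val_preimage_right]
        exact ⟨S.1.2, S.2.2⟩)⟩
      left_inv := fun S => by
        ext x
        by_cases hx : P x <;> simp [hx]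
      right_inv := fun S => by
        ext : 2
        · exact val_preimage_left _ _
        · exact val_preimage_right _ _ }

variable [DecidablePred P]

theorem isStable_subtypeCongr {f : Perm {x // P x}} {g : Perm {x // ¬ P x}} {S : Set X} :
    IsStable {f.subtypeCongr g} S ↔
      IsStable {f} (Subtype.val ⁻¹' S) ∧ IsStable {g} (Subtype.val ⁻¹' S) := by
  simp only [isStable_singleton, Set.mem_preimage]
  refine ⟨fun h => ⟨fun x => ?_, fun x => ?_⟩, fun h x => ?_⟩
  · rw [← h x, Perm.subtypeCongr.left_apply_subtype]
  · rw [← h x, Perm.subtypeCongr.right_apply_subtype]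
  · by_cases hx : P x
    · rw [Perm.subtypeCongr.left_apply _ _ hx, h.1]
    · rw [Perm.subtypeCongr.right_apply _ _ hx, h.2]

theorem isStable_subtypeCongr_setOf (f : Perm {x // P x}) (g : Perm {x // ¬ P x}) :
    IsStable {f.subtypeCongr g} {x | P x} :=
  isStable_subtypeCongr.2 ⟨isStable_singleton.2 fun x => iff_of_true (f x).2 x.2,
    isStable_singleton.2 fun x => iff_of_false (g x).2 x.2⟩

theorem orbitCount_subtypeCongr [Finite X] (f : Perm {x // P x}) (g : Perm {x // ¬ P x}) :
    orbitCount {f.subtypeCongr g} = orbitCount {f} + orbitCount {g} :=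
  orbitCount_eq_add fun _ => isStable_subtypeCongr

theorem orbitCount_subtypeCongr_pair [Finite X] (f f' : Perm {x // P x})
    (g g' : Perm {x // ¬ P x}) :
    orbitCount {f.subtypeCongr g, f'.subtypeCongr g'} =
      orbitCount {f, f'} + orbitCount {g, g'} :=
  orbitCount_eq_add fun S => by
    simp only [isStable_pair, isStable_subtypeCongr]
    tauto

theorem exists_eq_subtypeCongr {f : Perm X} (h : ∀ x, P (f x) ↔ P x) :
    ∃ (f₁ : Perm {x // P x}) (f₂ : Perm {x // ¬ P x}), f = f₁.subtypeCongr f₂ := by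
  refine ⟨f.subtypePerm h, f.subtypePerm fun x => not_congr (h x), ?_⟩
  ext x
  by_cases hx : P x
  · rw [Perm.subtypeCongr.left_apply _ _ hx, Perm.subtypePerm_apply]
  · rw [Perm.subtypeCongr.right_apply _ _ hx, Perm.subtypePerm_apply]

theorem subtypeCongr_mul (f f' : Perm {x // P x}) (g g' : Perm {x // ¬ P x}) :
    f.subtypeCongr g * f'.subtypeCongr g' = (f * f').subtypeCongr (g * g') :=
  ((Perm.subtypeCongrHom P).map_mul (f, g) (f', g')).symm

theorem subtypeCongr_inj {f f' : Perm {x // P x}} {g g' : Perm {x // ¬ P x}} :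
    f.subtypeCongr g = f'.subtypeCongr g' ↔ f = f' ∧ g = g' :=
  ((Perm.subtypeCongrHom_injective P).eq_iff (a := (f, g)) (b := (f', g'))).trans Prod.mk_inj

theorem semiconj_subtypeCongr_left (f : Perm {x // P x}) (g : Perm {x // ¬ P x}) :
    Semiconj Subtype.val f (f.subtypeCongr g) := fun x =>
  (Perm.subtypeCongr.left_apply_subtype f g x).symm

theorem semiconj_subtypeCongr_right (f : Perm {x // P x}) (g : Perm {x // ¬ P x}) :
    Semiconj Subtype.val g (f.subtypeCongr g) := fun x =>
  (Perm.subtypeCongr.right_apply_subtype f g x).symm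

theorem involutive_subtypeCongr {f : Perm {x // P x}} {g : Perm {x // ¬ P x}} :
    Involutive (f.subtypeCongr g) ↔ Involutive f ∧ Involutive g := by
  have hone : (1 : Perm X) = (1 : Perm {x // P x}).subtypeCongr (1 : Perm {x // ¬ P x}) :=
    (Perm.subtypeCongrHom P).map_one.symm
  simp only [involutive_iff_mul_self, subtypeCongr_mul, hone, subtypeCongr_inj]

theorem fixedPoints_subtypeCongr (f : Perm {x // P x}) (g : Perm {x // ¬ P x}) :
    fixedPoints (f.subtypeCongr g) =
      Subtype.val '' fixedPoints f ∪ Subtype.val '' fixedPoints g := by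
  ext x
  by_cases hx : P x
  · simp [mem_fixedPoints, IsFixedPt, Perm.subtypeCongr.left_apply _ _ hx, hx, Subtype.ext_iff]
  · simp [mem_fixedPoints, IsFixedPt, Perm.subtypeCongr.right_apply _ _ hx, hx, Subtype.ext_iff]

variable {s s' : X} (hs : P s) (hs' : ¬ P s')
include hs hs'

theorem not_sameCycle_subtypeCongr (f : Perm {x // P x}) (g : Perm {x // ¬ P x}) :
    ¬ SameCycle (f.subtypeCongr g) s s' := fun h =>
  hs' (((isStable_subtypeCongr_setOf f g).mem_iff_of_sameCycle h).1 hs)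

variable [Finite X] [DecidableEq X]

theorem minimalPeriod_subtypeCongr_mul_swap (f : Perm {x // P x}) (g : Perm {x // ¬ P x}) :
    minimalPeriod (f.subtypeCongr g * swap s s') s =
      minimalPeriod f ⟨s, hs⟩ + minimalPeriod g ⟨s', hs'⟩ := by
  rw [minimalPeriod_mul_swap (not_sameCycle_subtypeCongr hs hs' f g),
    ← minimalPeriod_eq_of_semiconj Subtype.val_injective (semiconj_subtypeCongr_left f g) ⟨s, hs⟩,
    ← minimalPeriod_eq_of_semiconj Subtype.val_injective (semiconj_subtypeCongr_right f g)
      ⟨s', hs'⟩]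

/-- By the genus inequality, the join of two hypermaps can only be planar if both are. -/
theorem isPlanar_subtypeCongr_mul_swap_iff {σ₁ β₁ : Perm {x // P x}}
    {σ₂ β₂ : Perm {x // ¬ P x}} :
    IsPlanar (σ₁.subtypeCongr σ₂) (β₁.subtypeCongr β₂ * swap s s') ↔
      IsPlanar σ₁ β₁ ∧ IsPlanar σ₂ β₂ := by
  have : Nonempty {x // P x} := ⟨⟨s, hs⟩⟩
  have : Nonempty {x // ¬ P x} := ⟨⟨s', hs'⟩⟩
  have hcard : Nat.card X = Nat.card {x // P x} + Nat.card {x // ¬ P x} := by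
    rw [← Nat.card_sum, Nat.card_congr (Equiv.sumCompl P)]
  have hβ := orbitCount_mul_swap_add_one (not_sameCycle_subtypeCongr hs hs' β₁ β₂)
  have hφ := orbitCount_mul_swap_add_one (not_sameCycle_subtypeCongr hs hs' (σ₁ * β₁) (σ₂ * β₂))
  have hpair := orbitCount_add_one_of_separated
    (isStable_pair_mul_swap_iff (not_sameCycle_subtypeCongr hs hs' β₁ β₂))
    (isStable_pair.2 ⟨isStable_subtypeCongr_setOf σ₁ σ₂, isStable_subtypeCongr_setOf β₁ β₂⟩)
    hs hs'
  rw [← subtypeCongr_mul, mul_assoc, subtypeCongr_mul, orbitCount_subtypeCongr] at hφ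
  rw [orbitCount_subtypeCongr] at hβ
  rw [orbitCount_subtypeCongr_pair] at hpair
  have hσ := orbitCount_subtypeCongr σ₁ σ₂
  have hpos₁ := orbitCount_pos {σ₁, β₁}
  have hpos₂ := orbitCount_pos {σ₂, β₂}
  have hgenus₁ := orbitCount_add_orbitCount_add_orbitCount_mul_le σ₁ β₁
  have hgenus₂ := orbitCount_add_orbitCount_add_orbitCount_mul_le σ₂ β₂
  constructor
  · rintro ⟨hconn, heuler⟩
    exact ⟨⟨by omega, by omega⟩, ⟨by omega, by omega⟩⟩
  · rintro ⟨⟨hconn₁, heuler₁⟩, ⟨hconn₂, heuler₂⟩⟩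
    exact ⟨by omega, by omega⟩

end SubtypeCongr

/-! ### Weighted sums over labelled maps -/

section Finsum

variable {ι α β M : Type*}

theorem finsum_finsum_mem [Finite ι] [Finite α] [AddCommMonoid M] (A : ι → Set α)
    (f : ι → α → M) :
    ∑ᶠ i, ∑ᶠ a ∈ A i, f i a = ∑ᶠ x ∈ {x : ι × α | x.2 ∈ A x.1}, f x.1 x.2 :=
  (finsum_curry (fun x : ι × α => ∑ᶠ _ : x.2 ∈ A x.1, f x.1 x.2) (Set.toFinite _)).symm

theorem finsum_mem_finsum_mem [Finite ι] [Finite α] [AddCommMonoid M] (s : Set ι)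
    (A : ι → Set α) (f : ι → α → M) :
    ∑ᶠ i ∈ s, ∑ᶠ a ∈ A i, f i a = ∑ᶠ x ∈ {x : ι × α | x.1 ∈ s ∧ x.2 ∈ A x.1}, f x.1 x.2 := by
  refine Eq.trans (finsum_congr fun i => ?_) (finsum_finsum_mem (fun i => {a | i ∈ s ∧ a ∈ A i}) f)
  by_cases hi : i ∈ s <;> simp [hi]

theorem finsum_mem_eq_finsum_mem_of_existsUnique [Finite ι] [Finite α] [AddCommMonoid M]
    {S : Set α} {I : Set ι} {p : ι → α → Prop} (h : ∀ a ∈ S, ∃! i, i ∈ I ∧ p i a) (f : α → M) :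
    ∑ᶠ a ∈ S, f a = ∑ᶠ i ∈ I, ∑ᶠ a ∈ {a ∈ S | p i a}, f a := by
  have hS : S = ⋃ i ∈ I, {a ∈ S | p i a} := by
    ext a
    simp only [Set.mem_iUnion, Set.mem_ofPred_eq, exists_prop]
    exact ⟨fun ha => (h a ha).exists.imp fun i hi => ⟨hi.1, ha, hi.2⟩, fun ⟨_, _, ha, _⟩ => ha⟩
  have hdisj : I.PairwiseDisjoint fun i => {a ∈ S | p i a} := fun i hi j hj hij =>
    Set.disjoint_left.2 fun a hai haj => hij ((h a hai.1).unique ⟨hi, hai.2⟩ ⟨hj, haj.2⟩)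
  conv_lhs => rw [hS]
  exact finsum_mem_biUnion hdisj I.toFinite fun _ _ => Set.toFinite _

theorem finsum_mem_mul_finsum_mem [Finite α] [Finite β] [NonUnitalNonAssocSemiring M]
    (A : Set α) (B : Set β) (f : α → M) (g : β → M) :
    (∑ᶠ a ∈ A, f a) * ∑ᶠ b ∈ B, g b = ∑ᶠ x ∈ A ×ˢ B, f x.1 * g x.2 := by
  have := Fintype.ofFinite α
  have := Fintype.ofFinite β
  classical
  simp only [finsum_mem_eq_toFinset_sum, Finset.sum_mul_sum, Set.toFinset_prod,
    Finset.sum_product]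

end Finsum

section WeightSum

open Polynomial Function

variable {X Y D : Type*}

/-- The labelled planar maps, encoded by a rotation system `p.1` and an involution `p.2` matching
half-edges into edges, whose legs (half-edges that are not matched) form the set `L`. -/
def planarMaps (L : Set X) : Set (Perm X × Perm X) :=
  {p | IsPlanar p.1 p.2 ∧ Involutive p.2 ∧ fixedPoints p.2 = L}

/-- The planar maps without legs in which `s` and `s'` form an edge. -/
def planarMapsWithEdge (s s' : X) : Set (Perm X × Perm X) :=
  {p ∈ planarMaps ∅ | p.2 s = s'}

/-- The sum over the maps in `A` of `(1 + X) ^ d`, where `d` is the degree of the face at `x`.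

A new edge from a fixed corner of a face of degree `d` to any of its `d` corners leaves a root face
of degree `1, …, d`. With this choice of weight, summing over these corners turns `(1 + X) ^ d` into
`(1 + X) * divX ((1 + X) ^ d)`. -/
noncomputable def weightSum (x : X) (A : Set (Perm X × Perm X)) : ℤ[X] :=
  ∑ᶠ p ∈ A, (1 + Polynomial.X) ^ minimalPeriod (p.1 * p.2) x

section Transport

variable (e : X ≃ Y)

theorem isStable_permCongr {f : Perm X} {S : Set Y} :
    IsStable {e.permCongr f} S ↔ IsStable {f} (e ⁻¹' S) := by
  simp [isStable_singleton, e.symm.forall_congr_left]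

theorem minimalPeriod_permCongr (f : Perm X) (x : X) :
    minimalPeriod (e.permCongr f) (e x) = minimalPeriod f x :=
  minimalPeriod_eq_of_semiconj e.injective (fun y => by simp) x

theorem weightSum_congr {A : Set (Perm X × Perm X)} {B : Set (Perm Y × Perm Y)}
    (h : ∀ p, (e.permCongr p.1, e.permCongr p.2) ∈ B ↔ p ∈ A) (x : X) :
    weightSum (e x) B = weightSum x A := by
  have hbij : Set.BijOn (e.permCongr.prodCongr e.permCongr) A B :=
    ⟨fun p hp => (h p).2 hp, (Equiv.injective _).injOn, fun q hq => by
      obtain ⟨p, rfl⟩ := (e.permCongr.prodCongr e.permCongr).surjective q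
      exact ⟨p, (h p).1 hq, rfl⟩⟩
  refine (finsum_mem_eq_of_bijOn _ hbij fun p _ => ?_).symm
  rw [prodCongr_apply, Prod.map_fst, Prod.map_snd, ← permCongr_mul, minimalPeriod_permCongr]

variable [Finite X] [Finite Y]

theorem orbitCount_eq_of_preimage {G : Set (Perm X)} {G' : Set (Perm Y)}
    (h : ∀ S, IsStable G' S ↔ IsStable G (e ⁻¹' S)) : orbitCount G' = orbitCount G :=
  orbitCount_eq_of_stableEquiv
    (((Equiv.Set.congr e).symm).subtypeEquiv fun S => by
      rw [h, Equiv.Set.congr_symm_apply, Equiv.image_symm_eq_preimage])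

theorem orbitCount_permCongr_pair (σ β : Perm X) :
    orbitCount {e.permCongr σ, e.permCongr β} = orbitCount {σ, β} :=
  orbitCount_eq_of_preimage e fun S => by
    rw [isStable_pair, isStable_pair, isStable_permCongr, isStable_permCongr]

theorem isPlanar_permCongr {σ β : Perm X} :
    IsPlanar (e.permCongr σ) (e.permCongr β) ↔ IsPlanar σ β := by
  have hsingle (f : Perm X) : orbitCount {e.permCongr f} = orbitCount {f} :=
    orbitCount_eq_of_preimage e fun _ => isStable_permCongr e
  have hpair := orbitCount_permCongr_pair e σ β
  have hσ := hsingle σ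
  have hβ := hsingle β
  have hφ := hsingle (σ * β)
  rw [permCongr_mul] at hφ
  have hcard := Nat.card_congr e
  exact ⟨fun ⟨h, h'⟩ => ⟨by omega, by omega⟩, fun ⟨h, h'⟩ => ⟨by omega, by omega⟩⟩

theorem permCongr_mem_planarMaps {L : Set X} {p : Perm X × Perm X} :
    (e.permCongr p.1, e.permCongr p.2) ∈ planarMaps (e '' L) ↔ p ∈ planarMaps L := by
  have hfix : fixedPoints (e.permCongr p.2) = e '' fixedPoints p.2 := by
    ext y
    simp [mem_fixedPoints, IsFixedPt, Equiv.eq_symm_apply]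
  have hinv : Involutive (e.permCongr p.2) ↔ Involutive p.2 := by
    simp [Involutive, e.symm.forall_congr_left]
  rw [planarMaps, planarMaps]
  exact and_congr (isPlanar_permCongr e) (and_congr hinv (by
    rw [hfix, e.injective.image_injective.eq_iff]))

theorem permCongr_mem_planarMapsWithEdge {s s' : X} {p : Perm X × Perm X} :
    (e.permCongr p.1, e.permCongr p.2) ∈ planarMapsWithEdge (e s) (e s') ↔
      p ∈ planarMapsWithEdge s s' := by
  refine and_congr ?_ ?_
  · rw [← Set.image_empty e, permCongr_mem_planarMaps]
  · simp

end Transport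

section LegInsertion

variable [Finite D] [DecidableEq D]

theorem insertBefore_mem_planarMaps {s : D} {σ β : Perm D} {L : Set D} :
    (insertBefore s σ, optionCongr β) ∈ planarMaps (insert none (some '' L)) ↔
      (σ, β) ∈ planarMaps L := by
  have hfix : fixedPoints (optionCongr β) = insert none (some '' fixedPoints β) := by
    ext x
    cases x <;> simp [mem_fixedPoints, IsFixedPt]
  have hinv : Involutive (optionCongr β) ↔ Involutive β := by
    simp [Involutive, Option.forall]
  refine and_congr isPlanar_insertBefore (and_congr hinv ?_)
  simp only [hfix]
  refine ⟨fun h => ?_, fun h => by rw [h]⟩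
  ext x
  simpa using Set.ext_iff.1 h (some x)

theorem bijOn_insertBefore [Nonempty D] (L : Set D) :
    Set.BijOn (fun x : D × Perm D × Perm D => (insertBefore x.1 x.2.1, optionCongr x.2.2))
      {x | x.2 ∈ planarMaps L} (planarMaps (insert none (some '' L))) := by
  refine ⟨fun x hx => insertBefore_mem_planarMaps.2 hx, fun ⟨s, σ, β⟩ _ ⟨t, τ, γ⟩ _ h => ?_,
    fun ⟨σ, β⟩ h => ?_⟩
  · obtain ⟨hσ, hβ⟩ := Prod.mk.inj h
    obtain ⟨rfl, rfl⟩ := insertBefore_inj.1 hσ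
    obtain rfl := optionCongr_injective hβ
    rfl
  · have hnone : β none = none := by
      have : none ∈ fixedPoints β := h.2.2 ▸ Set.mem_insert none _
      exact this
    obtain ⟨s, σ', β', rfl, rfl⟩ := exists_eq_insertBefore_of_connected h.1.connected hnone
    exact ⟨(s, σ', β'), insertBefore_mem_planarMaps.1 h, rfl⟩

omit [DecidableEq D] in
theorem weightSum_none [Nonempty D] :
    weightSum (none : Option D) (planarMaps {none}) =
      ∑ᶠ s : D, (1 + Polynomial.X) * weightSum s (planarMaps ∅) := by
  classical
  simp only [weightSum, mul_finsum_mem, finsum_finsum_mem]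
  have hbij := bijOn_insertBefore (∅ : Set D)
  rw [Set.image_empty, insert_empty_eq] at hbij
  refine (finsum_mem_eq_of_bijOn _ hbij fun x _ => ?_).symm
  rw [insertBefore_mul_optionCongr, minimalPeriod_insertBefore_none, pow_succ']

end LegInsertion

theorem weightSum_of_subsingleton [Subsingleton X] (r : X) :
    weightSum r (planarMaps {r}) = 1 + Polynomial.X := by
  have : Nonempty X := ⟨r⟩
  have hmem : planarMaps {r} = Set.univ := Set.eq_univ_of_forall fun p =>
    ⟨isPlanar_of_subsingleton _ _, fun _ => Subsingleton.elim _ _,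
      Set.ext fun x => iff_of_true (Subsingleton.elim _ _) (Subsingleton.elim _ _)⟩
  have : Unique (Perm X × Perm X) := uniqueOfSubsingleton (1, 1)
  rw [weightSum, hmem, finsum_mem_univ, finsum_unique, minimalPeriod_eq_one_of_subsingleton,
    pow_one]

end WeightSum

/-! ### Deletion of the root edge -/

section EdgeDeletion

open Polynomial Function

section MulSwap

variable {X : Type*} [DecidableEq X] {s s' : X} {β : Perm X}

theorem involutive_mul_swap_iff (hs : β s = s) (hs' : β s' = s') :
    Involutive (β * swap s s') ↔ Involutive β := by
  have hcomm : β * swap s s' = swap s s' * β := by rw [mul_swap_eq_swap_mul, hs, hs']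
  have hsq : β * swap s s' * (β * swap s s') = β * β := by
    rw [mul_assoc, ← mul_assoc (swap s s'), ← hcomm, mul_swap_mul_swap]
  rw [involutive_iff_mul_self, hsq, involutive_iff_mul_self]

theorem fixedPoints_mul_swap_eq_empty_iff (hne : s ≠ s') (hs : β s = s) (hs' : β s' = s') :
    fixedPoints (β * swap s s') = ∅ ↔ fixedPoints β = {s, s'} := by
  have hfix : fixedPoints (β * swap s s') = fixedPoints β \ {s, s'} := by
    ext x
    rcases eq_or_ne x s with rfl | hx
    · simp [mem_fixedPoints, IsFixedPt, hs', hne.symm]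
    rcases eq_or_ne x s' with rfl | hx'
    · simp [mem_fixedPoints, IsFixedPt, hs, hne]
    simp [mem_fixedPoints, IsFixedPt, swap_apply_of_ne_of_ne hx hx', hx, hx']
  rw [hfix, Set.sdiff_eq_empty]
  exact ⟨fun h => h.antisymm (Set.insert_subset hs (Set.singleton_subset_iff.2 hs')), Eq.subset⟩

theorem mul_swap_mem_planarMapsWithEdge_iff {σ : Perm X} (hne : s ≠ s') :
    (σ, β * swap s s') ∈ planarMapsWithEdge s s' ↔
      IsPlanar σ (β * swap s s') ∧ Involutive β ∧ fixedPoints β = {s, s'} := by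
  have hswap : (β * swap s s') s = β s' := by simp
  have hswap' : (β * swap s s') s' = β s := by simp
  constructor
  · rintro ⟨⟨hplanar, hinv, hfix⟩, hedge⟩
    have hs' : β s' = s' := hswap.symm.trans hedge
    have hs : β s = s := hswap'.symm.trans ((congrArg _ hedge).symm.trans (hinv s))
    exact ⟨hplanar, (involutive_mul_swap_iff hs hs').1 hinv,
      (fixedPoints_mul_swap_eq_empty_iff hne hs hs').1 hfix⟩
  · rintro ⟨hplanar, hinv, hfix⟩
    have hs : s ∈ fixedPoints β := hfix ▸ Set.mem_insert s _
    have hs' : s' ∈ fixedPoints β := hfix ▸ Set.mem_insert_of_mem s rfl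
    exact ⟨⟨hplanar, (involutive_mul_swap_iff hs hs').2 hinv,
      (fixedPoints_mul_swap_eq_empty_iff hne hs hs').2 hfix⟩, hswap.trans hs'⟩

theorem mul_swap_mem_planarMapsWithEdge_and_connected_iff [Finite X] {σ : Perm X} (hne : s ≠ s') :
    (σ, β * swap s s') ∈ planarMapsWithEdge s s' ∧ orbitCount {σ, β} = 1 ↔
      (σ, β) ∈ planarMaps {s, s'} ∧ SameCycle (σ * β) s s' := by
  have not_sameCycle (hfix : fixedPoints β = {s, s'}) : ¬ SameCycle β s s' := fun h => by
    have hs : s ∈ fixedPoints β := hfix ▸ Set.mem_insert s _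
    exact hne (h.eq_of_left hs)
  rw [mul_swap_mem_planarMapsWithEdge_iff hne]
  constructor
  · rintro ⟨⟨hplanar, hinv, hfix⟩, hconn⟩
    obtain ⟨hplanar, hφ⟩ := (isPlanar_mul_swap_iff hconn (not_sameCycle hfix)).1 hplanar
    exact ⟨⟨hplanar, hinv, hfix⟩, hφ⟩
  · rintro ⟨⟨hplanar, hinv, hfix⟩, hφ⟩
    exact ⟨⟨(isPlanar_mul_swap_iff hplanar.connected (not_sameCycle hfix)).2 ⟨hplanar, hφ⟩,
      hinv, hfix⟩, hplanar.connected⟩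

end MulSwap

section NonIsthmus

variable {D : Type*} [DecidableEq D]

theorem divX_one_add_X_pow (m : ℕ) :
    divX ((1 + Polynomial.X : ℤ[X]) ^ m) = ∑ i ∈ Finset.range m, (1 + Polynomial.X) ^ i := by
  have h := geom_sum_mul (1 + Polynomial.X : ℤ[X]) m
  rw [add_sub_cancel_left, eq_sub_iff_add_eq] at h
  rw [← h, divX_add, divX_one, add_zero]
  exact Polynomial.ext fun n => by rw [coeff_divX, coeff_mul_X]

variable [Finite D]

theorem finsum_sameCycle_insertBefore_mul_swap (f : Perm D) (e : D) :
    ∑ᶠ t ∈ {t | SameCycle f t e}, (1 + Polynomial.X : ℤ[X]) ^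
        minimalPeriod (insertBefore t f * swap (some e) none) (some e) =
      (1 + Polynomial.X) * divX ((1 + Polynomial.X) ^ minimalPeriod f e) := by
  have hback (i : ℕ) : f^[i] (f.symm^[i] e) = e := f.right_inv.iterate i e
  have hperiod (i : ℕ) : minimalPeriod f (f.symm^[i] e) = minimalPeriod f e := by
    rw [← minimalPeriod_apply_iterate (f.injective.mem_periodicPts _) i, hback]
  have hbij : Set.BijOn (fun i => f.symm^[i] e) (Finset.range (minimalPeriod f e))
      {t | SameCycle f t e} := by
    simp only [Finset.coe_range]
    refine ⟨fun i _ => ?_, fun i hi j hj hij => ?_, fun t ht => ?_⟩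
    · exact ⟨i, by rw [zpow_natCast, ← iterate_eq_pow, hback]⟩
    · rw [Set.mem_Iio, ← hperiod i] at hi hj
      refine (iterate_eq_iterate_iff_of_lt_minimalPeriod hi hj).1 ?_
      dsimp only at hij
      rw [hback, hij, hback]
    · obtain ⟨i, hi, rfl⟩ := exists_iterate_eq_of_sameCycle ht
      have ht : f.symm^[i] (f^[i] t) = t := f.left_inv.iterate i t
      refine ⟨i, ?_, ht⟩
      rwa [Set.mem_Iio, ← hperiod i, ht]
  rw [divX_one_add_X_pow, Finset.mul_sum, ← finsum_mem_coe_finset]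
  refine (finsum_mem_eq_of_bijOn _ hbij fun i hi => ?_).symm
  have hi : i < minimalPeriod f (f.symm^[i] e) := by
    rw [hperiod]
    simpa using hi
  rw [swap_comm, minimalPeriod_insertBefore_mul_swap hi (hback i), pow_succ']

theorem bijOn_insertBefore_mul_swap (e : D) :
    Set.BijOn (fun x : (Perm D × Perm D) × D =>
        (insertBefore x.2 x.1.1, optionCongr x.1.2 * swap (some e) none))
      {x | x.1 ∈ planarMaps {e} ∧ x.2 ∈ {t | SameCycle (x.1.1 * x.1.2) t e}}
      {p ∈ planarMapsWithEdge (some e) none | orbitCount {p.1, p.2 * swap (some e) none} = 1} := by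
  have hmem (σ β : Perm D) (t : D) :
      (insertBefore t σ, optionCongr β * swap (some e) none) ∈
          {p ∈ planarMapsWithEdge (some e) none |
            orbitCount {p.1, p.2 * swap (some e) none} = 1} ↔
        (σ, β) ∈ planarMaps {e} ∧ SameCycle (σ * β) t e := by
    refine (and_congr_right' (by simp only [mul_swap_mul_swap])).trans
      ((mul_swap_mem_planarMapsWithEdge_and_connected_iff (Option.some_ne_none e)).trans ?_)
    rw [Set.pair_comm, ← Set.image_singleton, insertBefore_mem_planarMaps,
      insertBefore_mul_optionCongr, sameCycle_comm, sameCycle_insertBefore_none_some_iff]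
  refine ⟨fun x hx => (hmem _ _ _).2 hx, fun ⟨⟨σ, β⟩, t⟩ _ ⟨⟨σ', β'⟩, t'⟩ _ h => ?_,
    fun ⟨σ, β⟩ h => ?_⟩
  · obtain ⟨hσ, hβ⟩ := Prod.mk.inj h
    obtain ⟨rfl, rfl⟩ := insertBefore_inj.1 hσ
    obtain rfl := optionCongr_injective (mul_right_cancel hβ)
    rfl
  · have : Nonempty D := ⟨e⟩
    obtain ⟨⟨⟨-, hinv, -⟩, hedge⟩, hconn⟩ := id h
    have hfix : (β * swap (some e) none) none = none := by
      rw [Perm.mul_apply, swap_apply_right]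
      exact hedge
    obtain ⟨t, σ, β', rfl, hβ⟩ := exists_eq_insertBefore_of_connected hconn hfix
    obtain rfl : β = optionCongr β' * swap (some e) none := by rw [← hβ, mul_swap_mul_swap]
    exact ⟨((σ, β'), t), (hmem _ _ _).1 h, rfl⟩

theorem weightSum_planarMapsWithEdge_connected (e : D) :
    weightSum (some e)
        {p ∈ planarMapsWithEdge (some e) none | orbitCount {p.1, p.2 * swap (some e) none} = 1} =
      (1 + Polynomial.X) * divX (weightSum e (planarMaps {e})) := by
  have hdivX : divX (weightSum e (planarMaps {e})) =
      ∑ᶠ p ∈ planarMaps {e}, divX ((1 + Polynomial.X) ^ minimalPeriod (p.1 * p.2) e) :=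
    (divX_hom (R := ℤ)).map_finsum_mem _ (Set.toFinite _)
  rw [hdivX, mul_finsum_mem]
  simp only [← finsum_sameCycle_insertBefore_mul_swap]
  rw [finsum_mem_finsum_mem]
  refine (finsum_mem_eq_of_bijOn _ (bijOn_insertBefore_mul_swap e) fun x _ => ?_).symm
  rw [← mul_assoc, insertBefore_mul_optionCongr]

end NonIsthmus

end EdgeDeletion

section Isthmus

open Polynomial Function

variable {X : Type*} {s s' : X}

section Split

variable [Finite X] [DecidableEq X] {Y : Set X} [DecidablePred (· ∈ Y)]

theorem subtypeCongr_mul_swap_mem_planarMapsWithEdge_iff (hs : s ∈ Y) (hs' : s' ∉ Y)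
    {σ₁ β₁ : Perm {x // x ∈ Y}} {σ₂ β₂ : Perm {x // x ∉ Y}} :
    (σ₁.subtypeCongr σ₂, β₁.subtypeCongr β₂ * swap s s') ∈ planarMapsWithEdge s s' ↔
      (σ₁, β₁) ∈ planarMaps {⟨s, hs⟩} ∧ (σ₂, β₂) ∈ planarMaps {⟨s', hs'⟩} := by
  have hne : s ≠ s' := fun h => hs' (h ▸ hs)
  have hfix : fixedPoints (β₁.subtypeCongr β₂) = {s, s'} ↔
      fixedPoints β₁ = {⟨s, hs⟩} ∧ fixedPoints β₂ = {⟨s', hs'⟩} := by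
    rw [fixedPoints_subtypeCongr]
    refine ⟨fun h => ⟨?_, ?_⟩, fun ⟨h₁, h₂⟩ => ?_⟩
    · ext ⟨x, hx⟩
      have hxs' : x ≠ s' := fun h => hs' (h ▸ hx)
      simpa [hx, hxs'] using Set.ext_iff.1 h x
    · ext ⟨x, hx⟩
      have hxs : x ≠ s := fun h => hx (h ▸ hs)
      simpa [hx, hxs] using Set.ext_iff.1 h x
    · rw [h₁, h₂, Set.image_singleton, Set.image_singleton, Set.singleton_union]
  rw [mul_swap_mem_planarMapsWithEdge_iff hne, isPlanar_subtypeCongr_mul_swap_iff hs hs',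
    involutive_subtypeCongr, hfix]
  simp only [planarMaps, Set.mem_ofPred_eq]
  tauto

theorem bijOn_subtypeCongr_mul_swap (hs : s ∈ Y) (hs' : s' ∉ Y) :
    Set.BijOn (fun x : (Perm {x // x ∈ Y} × Perm {x // x ∈ Y}) ×
          (Perm {x // x ∉ Y} × Perm {x // x ∉ Y}) =>
        (x.1.1.subtypeCongr x.2.1, x.1.2.subtypeCongr x.2.2 * swap s s'))
      (planarMaps {⟨s, hs⟩} ×ˢ planarMaps {⟨s', hs'⟩})
      {p ∈ planarMapsWithEdge s s' | IsStable {p.1, p.2 * swap s s'} Y} := by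
  refine ⟨fun x hx => ⟨(subtypeCongr_mul_swap_mem_planarMapsWithEdge_iff hs hs').2 hx, ?_⟩,
    fun ⟨⟨σ₁, β₁⟩, ⟨σ₂, β₂⟩⟩ _ ⟨⟨τ₁, γ₁⟩, ⟨τ₂, γ₂⟩⟩ _ h => ?_, fun ⟨σ, β⟩ ⟨h, hY⟩ => ?_⟩
  · dsimp only
    rw [mul_swap_mul_swap]
    exact isStable_pair.2 ⟨isStable_subtypeCongr_setOf _ _, isStable_subtypeCongr_setOf _ _⟩
  · obtain ⟨hσ, hβ⟩ := Prod.mk.inj h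
    obtain ⟨rfl, rfl⟩ := subtypeCongr_inj.1 hσ
    obtain ⟨rfl, rfl⟩ := subtypeCongr_inj.1 (mul_right_cancel hβ)
    rfl
  · obtain ⟨hσ, hβ⟩ := isStable_pair.1 hY
    obtain ⟨σ₁, σ₂, rfl⟩ := exists_eq_subtypeCongr (isStable_singleton.1 hσ)
    obtain ⟨β₁, β₂, hβ⟩ := exists_eq_subtypeCongr (isStable_singleton.1 hβ)
    obtain rfl : β = β₁.subtypeCongr β₂ * swap s s' := by rw [← hβ, mul_swap_mul_swap]
    exact ⟨((σ₁, β₁), (σ₂, β₂)),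
      (subtypeCongr_mul_swap_mem_planarMapsWithEdge_iff hs hs').1 h, rfl⟩

omit [DecidablePred (· ∈ Y)] in
theorem weightSum_planarMapsWithEdge_isStable (hs : s ∈ Y) (hs' : s' ∉ Y) :
    weightSum s {p ∈ planarMapsWithEdge s s' | IsStable {p.1, p.2 * swap s s'} Y} =
      weightSum (⟨s, hs⟩ : {x // x ∈ Y}) (planarMaps {⟨s, hs⟩}) *
        weightSum (⟨s', hs'⟩ : {x // x ∉ Y}) (planarMaps {⟨s', hs'⟩}) := by
  classical
  simp only [weightSum]
  rw [finsum_mem_mul_finsum_mem]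
  refine (finsum_mem_eq_of_bijOn _ (bijOn_subtypeCongr_mul_swap hs hs') fun x _ => ?_).symm
  rw [← pow_add, ← mul_assoc, subtypeCongr_mul, minimalPeriod_subtypeCongr_mul_swap hs hs']

end Split

variable [Finite X] [DecidableEq X]

theorem existsUnique_isStable_of_mem_planarMapsWithEdge {p : Perm X × Perm X}
    (hp : p ∈ planarMapsWithEdge s s') (hconn : orbitCount {p.1, p.2 * swap s s'} ≠ 1) :
    ∃! Y : Set X, (s ∈ Y ∧ s' ∉ Y) ∧ IsStable {p.1, p.2 * swap s s'} Y := by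
  obtain ⟨σ, α⟩ := p
  obtain ⟨⟨⟨hα, -⟩, hinv, hfix⟩, hedge⟩ := hp
  dsimp only at hα hinv hfix hedge hconn ⊢
  obtain ⟨β, rfl⟩ : ∃ β, α = β * swap s s' := ⟨α * swap s s', (mul_swap_mul_swap α s s').symm⟩
  rw [mul_swap_mul_swap] at hconn ⊢
  have hβ : ¬ SameCycle β s s' := fun h => by
    have hs : β s = s := by
      have := hinv s
      rwa [hedge, Perm.mul_apply, swap_apply_right] at this
    have hmem : s ∈ fixedPoints (β * swap s s') := hedge.trans (h.eq_of_left hs).symm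
    exact Set.notMem_empty s (hfix ▸ hmem)
  have hstable := isStable_pair_mul_swap_iff (σ := σ) hβ
  obtain ⟨Y, hY, hs, hs'⟩ : ∃ Y, IsStable {σ, β} Y ∧ s ∈ Y ∧ s' ∉ Y := by
    by_contra hsep
    exact hconn (hα ▸ (orbitCount_eq_of_not_separated hstable hsep).symm)
  refine ⟨Y, ⟨⟨hs, hs'⟩, hY⟩, fun Z ⟨⟨hZs, hZs'⟩, hZ⟩ => symmDiff_eq_bot.1 ?_⟩
  have hsymmDiff : IsStable {σ, β * swap s s'} (symmDiff Z Y) :=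
    (hstable _).2 ⟨hZ.symmDiff hY, by simp [Set.mem_symmDiff, hs, hs', hZs, hZs']⟩
  refine Set.eq_empty_of_forall_notMem fun x hx => ?_
  have : s ∈ symmDiff Z Y := hsymmDiff.eq_univ_of_orbitCount_eq_one hα hx ▸ Set.mem_univ s
  simp [Set.mem_symmDiff, hs, hZs] at this

theorem weightSum_planarMapsWithEdge_not_connected (s s' : X) :
    weightSum s {p ∈ planarMapsWithEdge s s' | orbitCount {p.1, p.2 * swap s s'} ≠ 1} =
      ∑ᶠ Y ∈ {Y : Set X | s ∈ Y ∧ s' ∉ Y},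
        weightSum s {p ∈ planarMapsWithEdge s s' | IsStable {p.1, p.2 * swap s s'} Y} := by
  rw [weightSum, finsum_mem_eq_finsum_mem_of_existsUnique fun p hp =>
    existsUnique_isStable_of_mem_planarMapsWithEdge hp.1 hp.2]
  refine finsum_mem_congr rfl fun Y ⟨hs, hs'⟩ => ?_
  have hset : {p ∈ {p ∈ planarMapsWithEdge s s' | orbitCount {p.1, p.2 * swap s s'} ≠ 1} |
      IsStable {p.1, p.2 * swap s s'} Y} =
      {p ∈ planarMapsWithEdge s s' | IsStable {p.1, p.2 * swap s s'} Y} := by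
    refine Set.ext fun p => ⟨fun h => ⟨h.1.1, h.2⟩, fun h => ⟨⟨h.1, fun hconn => ?_⟩, h.2⟩⟩
    exact hs' (h.2.eq_univ_of_orbitCount_eq_one hconn hs ▸ Set.mem_univ s')
  rw [hset, weightSum]

end Isthmus

/-! ### Tutte's recursion -/

section Recursion

open Polynomial Function

variable {D : Type*}

/-- The weighted number of labelled planar maps on `k + 1` half-edges whose only leg is `0`. -/
noncomputable def plantedWeight (k : ℕ) : ℤ[X] :=
  weightSum (0 : Fin (k + 1)) (planarMaps {0})

theorem weightSum_planarMaps_singleton [Finite D] {k : ℕ} (hD : Nat.card D = k + 1) (r : D) :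
    weightSum r (planarMaps {r}) = plantedWeight k := by
  classical
  let e := (Finite.equivFinOfCardEq hD).symm
  let e' := e.trans (swap (e 0) r)
  have he' : e' 0 = r := swap_apply_left _ _
  rw [plantedWeight, ← weightSum_congr e' (fun p => ?_), he']
  rw [← permCongr_mem_planarMaps e', Set.image_singleton, he']

theorem plantedWeight_zero : plantedWeight 0 = 1 + X :=
  weightSum_of_subsingleton (0 : Fin 1)

theorem plantedWeight_of_odd {k : ℕ} (hk : Odd k) : plantedWeight k = 0 := by
  have hempty : planarMaps {(0 : Fin (k + 1))} = ∅ :=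
    Set.eq_empty_of_forall_notMem fun p ⟨_, hinv, hfix⟩ => by
      have := two_mul_orbitCount_of_involutive hinv
      rw [hfix, Set.ncard_singleton, Nat.card_fin] at this
      obtain ⟨m, rfl⟩ := hk
      omega
  rw [plantedWeight, weightSum, hempty, finsum_mem_empty]

theorem finsum_separating {M : Type*} [Finite D] [AddCommMonoid M] {s s' : D} (hne : s ≠ s')
    {N : ℕ} (hD : Nat.card D = N + 2) (g : ℕ → ℕ → M) :
    ∑ᶠ Y ∈ {Y : Set D | s ∈ Y ∧ s' ∉ Y}, g Y.ncard Yᶜ.ncard =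
      ∑ p ∈ Finset.HasAntidiagonal.antidiagonal N, N.choose p.1 • g (p.1 + 1) (p.2 + 1) := by
  classical
  have := Fintype.ofFinite D
  rw [Nat.card_eq_fintype_card] at hD
  set A : Finset D := {s, s'}ᶜ with hA
  have hAcard : A.card = N := by
    rw [hA, Finset.card_compl, Finset.card_pair hne, hD, Nat.add_sub_cancel]
  have hs {Z} (hZ : Z ∈ A.powerset) : s ∉ Z := fun h => by
    simpa [hA] using Finset.mem_powerset.1 hZ h
  have hs' {Z} (hZ : Z ∈ A.powerset) : s' ∉ Z := fun h => by
    simpa [hA] using Finset.mem_powerset.1 hZ h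
  have hbij : Set.BijOn (fun Z : Finset D => (↑(insert s Z) : Set D)) A.powerset
      {Y : Set D | s ∈ Y ∧ s' ∉ Y} := by
    refine ⟨fun Z hZ => ⟨by simp, by simpa [hne.symm] using hs' hZ⟩, fun Z hZ Z' hZ' h => ?_,
      fun Y ⟨hsY, hsY'⟩ => ⟨Y.toFinset.erase s, ?_, ?_⟩⟩
    · rw [← Finset.erase_insert (hs hZ), Finset.coe_injective h, Finset.erase_insert (hs hZ')]
    · refine Finset.mem_powerset.2 fun x hx => ?_
      have hx' : x ≠ s' := fun h => hsY' (h ▸ by simpa using Finset.mem_of_mem_erase hx)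
      simp [hA, Finset.ne_of_mem_erase hx, hx']
    · dsimp only
      rw [Finset.insert_erase (Set.mem_toFinset.2 hsY), Set.coe_toFinset]
  rw [Finset.Nat.sum_antidiagonal_eq_sum_range_succ_mk, ← hAcard,
    ← Finset.sum_powerset_apply_card fun k => g (k + 1) (A.card - k + 1), ← finsum_mem_coe_finset]
  refine (finsum_mem_eq_of_bijOn _ hbij fun Z hZ => ?_).symm
  have hle := Finset.card_le_card (Finset.mem_powerset.1 hZ)
  rw [Set.ncard_compl, Set.ncard_coe_finset, Finset.card_insert_of_notMem (hs hZ),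
    Nat.card_eq_fintype_card, hD]
  congr 1
  omega

theorem weightSum_planarMapsWithEdge_connected_of_card [Finite D] [DecidableEq D] {N : ℕ}
    (hD : Nat.card D = N + 2) {s s' : D} (hne : s ≠ s') :
    weightSum s {p ∈ planarMapsWithEdge s s' | orbitCount {p.1, p.2 * swap s s'} = 1} =
      (1 + X) * divX (plantedWeight N) := by
  let e := optionSubtypeNe s'
  have hs : e (some ⟨s, hne⟩) = s := rfl
  have hs' : e none = s' := rfl
  have hcard : Nat.card {x // x ≠ s'} = N + 1 := by
    have := Nat.card_congr e
    rw [Finite.card_option] at this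
    omega
  rw [← weightSum_planarMaps_singleton hcard ⟨s, hne⟩, ← weightSum_planarMapsWithEdge_connected,
    ← weightSum_congr e (fun p => ?_), hs]
  refine and_congr ?_ ?_
  · rw [← permCongr_mem_planarMapsWithEdge e, hs, hs']
  · have hswap : swap s s' = e.permCongr (swap (some ⟨s, hne⟩) none) := by
      rw [permCongr_def, symm_trans_swap_trans, hs, hs']
    rw [hswap, ← permCongr_mul, orbitCount_permCongr_pair]

theorem weightSum_planarMapsWithEdge_not_connected_of_card [Finite D] [DecidableEq D] {N : ℕ}
    (hD : Nat.card D = N + 2) {s s' : D} (hne : s ≠ s') :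
    weightSum s {p ∈ planarMapsWithEdge s s' | orbitCount {p.1, p.2 * swap s s'} ≠ 1} =
      ∑ p ∈ Finset.HasAntidiagonal.antidiagonal N,
        N.choose p.1 • (plantedWeight p.1 * plantedWeight p.2) := by
  have hcard {Y : Set D} {r : D} (hr : r ∈ Y) : Nat.card Y = Y.ncard - 1 + 1 :=
    (Nat.sub_add_cancel ((Set.ncard_pos Y.toFinite).2 ⟨r, hr⟩)).symm
  rw [weightSum_planarMapsWithEdge_not_connected]
  refine Eq.trans (finsum_mem_congr rfl fun Y ⟨hs, hs'⟩ => ?_)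
    (finsum_separating hne hD fun i j => plantedWeight (i - 1) * plantedWeight (j - 1))
  rw [weightSum_planarMapsWithEdge_isStable hs hs', weightSum_planarMaps_singleton (hcard hs)]
  exact congrArg _ (weightSum_planarMaps_singleton (hcard (Y := Yᶜ) hs') ⟨s', hs'⟩)

/-- The weighted number of labelled planar maps on `N + 2` half-edges without legs in which two
given half-edges form an edge: the sum accounts for the maps in which this edge is an isthmus. -/
noncomputable def edgeWeight (N : ℕ) : ℤ[X] :=
  ∑ p ∈ Finset.HasAntidiagonal.antidiagonal N,
      N.choose p.1 • (plantedWeight p.1 * plantedWeight p.2) +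
    (1 + X) * divX (plantedWeight N)

theorem weightSum_planarMapsWithEdge [Finite D] {N : ℕ} (hD : Nat.card D = N + 2) {s s' : D}
    (hne : s ≠ s') : weightSum s (planarMapsWithEdge s s') = edgeWeight N := by
  classical
  rw [edgeWeight, ← weightSum_planarMapsWithEdge_not_connected_of_card hD hne,
    ← weightSum_planarMapsWithEdge_connected_of_card hD hne, add_comm]
  exact (finsum_mem_inter_add_sdiff' _ (Set.toFinite _)).symm

theorem weightSum_planarMaps_empty [Finite D] {N : ℕ} (hD : Nat.card D = N + 2) (s : D) :
    weightSum s (planarMaps ∅) = (N + 1) • edgeWeight N := by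
  have hpartition (p : Perm D × Perm D) (hp : p ∈ planarMaps ∅) :
      ∃! s', s' ∈ ({s}ᶜ : Set D) ∧ p.2 s = s' :=
    ⟨p.2 s, ⟨fun h => Set.notMem_empty s (hp.2.2 ▸ h), rfl⟩, fun _ h => h.2.symm⟩
  have hcompl : ({s}ᶜ : Set D).ncard = N + 1 := by
    rw [Set.ncard_compl, hD, Set.ncard_singleton, Nat.add_succ_sub_one]
  rw [weightSum, finsum_mem_eq_finsum_mem_of_existsUnique hpartition, ← hcompl,
    Set.ncard_eq_toFinset_card _, ← Finset.sum_const, ← finsum_mem_eq_finite_toFinset_sum]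
  exact finsum_mem_congr rfl fun s' hs' => weightSum_planarMapsWithEdge hD (Ne.symm hs')

theorem plantedWeight_add_two (N : ℕ) :
    plantedWeight (N + 2) = ((N + 2) * (N + 1)) • ((1 + X) * edgeWeight N) := by
  rw [← weightSum_planarMaps_singleton (D := Option (Fin (N + 2))) (by simp) none, weightSum_none]
  simp only [weightSum_planarMaps_empty (Nat.card_fin (N + 2))]
  rw [finsum_eq_sum_of_fintype, Finset.sum_const, Finset.card_univ, Fintype.card_fin,
    mul_smul_comm, mul_smul]

/-- The generating polynomial of rooted planar maps with `n` edges, counted by the degree `d` of the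
root face with weight `(1 + X) ^ d`, as given by Tutte's recursion. -/
noncomputable def tuttePoly : ℕ → ℤ[X]
  | 0 => 1
  | n + 1 => (1 + X) ^ 2 * ∑ i : Fin (n + 1), tuttePoly i * tuttePoly (n - i) +
      (1 + X) * divX ((1 + X) * tuttePoly n)

theorem tuttePoly_zero : tuttePoly 0 = 1 := by
  rw [tuttePoly]

theorem tuttePoly_succ (n : ℕ) :
    tuttePoly (n + 1) =
      (1 + X) ^ 2 * ∑ p ∈ Finset.HasAntidiagonal.antidiagonal n, tuttePoly p.1 * tuttePoly p.2 +
        (1 + X) * divX ((1 + X) * tuttePoly n) := by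
  rw [tuttePoly, Finset.Nat.sum_antidiagonal_eq_sum_range_succ
      (fun i j => tuttePoly i * tuttePoly j),
    Finset.sum_range]

theorem sum_antidiagonal_two_mul {M : Type*} [AddCommMonoid M] (f : ℕ × ℕ → M)
    (hf : ∀ i j, Odd i → f (i, j) = 0) (n : ℕ) :
    ∑ p ∈ Finset.HasAntidiagonal.antidiagonal (2 * n), f p =
      ∑ p ∈ Finset.HasAntidiagonal.antidiagonal n, f (2 * p.1, 2 * p.2) := by
  refine (Finset.sum_of_injOn (fun p : ℕ × ℕ => (2 * p.1, 2 * p.2)) ?_ ?_ ?_ fun _ _ => rfl).symm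
  · rintro ⟨i, j⟩ - ⟨i', j'⟩ - h
    simpa using h
  · rintro ⟨i, j⟩ h
    simp only [Finset.mem_coe, Finset.HasAntidiagonal.mem_antidiagonal] at h ⊢
    omega
  · rintro ⟨i, j⟩ h himage
    rw [Finset.HasAntidiagonal.mem_antidiagonal] at h
    refine hf i j (Nat.not_even_iff_odd.1 fun ⟨k, hk⟩ => himage ⟨(k, n - k), ?_⟩)
    simp only [Finset.mem_coe, Finset.HasAntidiagonal.mem_antidiagonal, Prod.mk.injEq]
    omega

theorem edgeWeight_two_mul {n : ℕ} (h : ∀ m ≤ n,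
    plantedWeight (2 * m) = (2 * m).factorial • ((1 + X) * tuttePoly m)) :
    edgeWeight (2 * n) = (2 * n).factorial • tuttePoly (n + 1) := by
  have hproduct (p : ℕ × ℕ) (hp : p ∈ Finset.HasAntidiagonal.antidiagonal n) :
      (2 * n).choose (2 * p.1) • (plantedWeight (2 * p.1) * plantedWeight (2 * p.2)) =
        (2 * n).factorial • ((1 + X) ^ 2 * (tuttePoly p.1 * tuttePoly p.2)) := by
    obtain ⟨i, j⟩ := p
    obtain rfl : i + j = n := Finset.HasAntidiagonal.mem_antidiagonal.1 hp
    rw [h i (by omega), h j (by omega), mul_add,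
      ← Nat.add_choose_mul_factorial_mul_factorial, Nat.choose_symm_add]
    simp only [nsmul_eq_mul, Nat.cast_mul]
    ring
  rw [edgeWeight, sum_antidiagonal_two_mul _ fun i j hi => by
      rw [plantedWeight_of_odd hi, zero_mul, smul_zero],
    Finset.sum_congr rfl hproduct, ← Finset.smul_sum, ← Finset.mul_sum, h n le_rfl, tuttePoly_succ,
    smul_add, ← divX_hom_toFun, map_nsmul, divX_hom_toFun, mul_smul_comm]

theorem plantedWeight_two_mul (n : ℕ) :
    plantedWeight (2 * n) = (2 * n).factorial • ((1 + X) * tuttePoly n) := by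
  induction n using Nat.strong_induction_on with
  | _ n ih =>
    cases n with
    | zero => simp [plantedWeight_zero, tuttePoly_zero]
    | succ n =>
      rw [Nat.mul_succ, plantedWeight_add_two, edgeWeight_two_mul fun m hm => ih m (by omega),
        mul_smul_comm, smul_smul, Nat.factorial_succ, Nat.factorial_succ, mul_assoc]

theorem weightSum_planarMaps_empty_eq_tuttePoly [Finite D] {n : ℕ}
    (hD : Nat.card D = 2 * (n + 1)) (s : D) :
    weightSum s (planarMaps ∅) = (2 * n + 1).factorial • tuttePoly (n + 1) := by
  rw [weightSum_planarMaps_empty (N := 2 * n) hD,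
    edgeWeight_two_mul fun m _ => plantedWeight_two_mul m, smul_smul, Nat.factorial_succ]

end Recursion

/-! ### Tutte's functional equation -/

section TutteEquation

open Polynomial

open scoped PowerSeries

theorem exists_powerSeries_eq_one_add_mul_sq {R : Type*} [CommRing R] {y : R⟦X⟧}
    (hy : PowerSeries.constantCoeff y = 0) : ∃ T : R⟦X⟧, T = 1 + y * T ^ 2 := by
  have hsubst := PowerSeries.HasSubst.of_constantCoeff_zero' hy
  let c : R⟦X⟧ := PowerSeries.map (Nat.castRingHom R) PowerSeries.catalanSeries
  have hc : c ^ 2 * PowerSeries.X + 1 = c := by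
    simpa using congrArg (PowerSeries.map (Nat.castRingHom R))
      PowerSeries.catalanSeries_sq_mul_X_add_one
  refine ⟨c.subst y, ?_⟩
  conv_lhs => rw [← hc]
  rw [← PowerSeries.coe_substAlgHom hsubst, map_add, map_mul, map_pow, map_one,
    PowerSeries.coe_substAlgHom hsubst, PowerSeries.subst_X hsubst, add_comm, mul_comm]

theorem exists_powerSeries_eq_X_mul_quadratic {R : Type*} [CommRing R] (p q r : R⟦X⟧) :
    ∃ H : R⟦X⟧, H = PowerSeries.X * (p + q * H + r * H ^ 2) := by
  obtain ⟨w, hw⟩ : ∃ w, (1 - PowerSeries.X * q) * w = 1 :=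
    IsUnit.exists_right_inv (by simp [PowerSeries.isUnit_iff_constantCoeff])
  obtain ⟨T, hT⟩ := exists_powerSeries_eq_one_add_mul_sq
    (y := PowerSeries.X ^ 2 * (p * r * w ^ 2)) (by simp)
  refine ⟨PowerSeries.X * p * w * T, ?_⟩
  linear_combination (PowerSeries.X * p) * (hT + T * hw)

/-- Tutte's functional equation for the generating series `M` of planar maps by edges and degree of
the root face. The polynomial variable is the catalytic variable minus one, so that the divided
difference at one becomes `(M - M₁) / X`; here `M₁` stands for the specialization of `M` at
`X = 0`, and the equation is multiplied by `X`. -/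
def TutteEquation (M : ℤ[X]⟦X⟧) (M₁ : ℤ⟦X⟧) : Prop :=
  PowerSeries.C X * M = PowerSeries.C X +
    PowerSeries.X * (PowerSeries.C ((1 + X) ^ 2 * X) * M ^ 2 +
      PowerSeries.C (1 + X) * (PowerSeries.C (1 + X) * M - PowerSeries.map Polynomial.C M₁))

variable {M : ℤ[X]⟦X⟧} {M₁ : ℤ⟦X⟧}

theorem TutteEquation.coeff_zero (h : TutteEquation M M₁) : PowerSeries.coeff 0 M = 1 := by
  have h0 := congrArg (PowerSeries.coeff 0) h
  rw [PowerSeries.coeff_C_mul, map_add, PowerSeries.coeff_zero_X_mul, PowerSeries.coeff_zero_C,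
    add_zero] at h0
  exact mul_left_cancel₀ X_ne_zero (h0.trans (mul_one X).symm)

theorem TutteEquation.X_mul_coeff_succ (h : TutteEquation M M₁) (k : ℕ) :
    X * PowerSeries.coeff (k + 1) M =
      (1 + X) ^ 2 * X * ∑ p ∈ Finset.HasAntidiagonal.antidiagonal k,
        PowerSeries.coeff p.1 M * PowerSeries.coeff p.2 M +
      (1 + X) * ((1 + X) * PowerSeries.coeff k M - Polynomial.C (PowerSeries.coeff k M₁)) := by
  have hk := congrArg (PowerSeries.coeff (k + 1)) h
  rwa [PowerSeries.coeff_C_mul, map_add, PowerSeries.coeff_succ_X_mul, map_add,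
    PowerSeries.coeff_C_mul, PowerSeries.coeff_C_mul, map_sub, PowerSeries.coeff_C_mul, sq M,
    PowerSeries.coeff_mul, PowerSeries.coeff_C, if_neg (Nat.succ_ne_zero k), zero_add,
    PowerSeries.coeff_map] at hk

theorem TutteEquation.coeff_eq_coeff_coeff_zero (h : TutteEquation M M₁) (k : ℕ) :
    PowerSeries.coeff k M₁ = (PowerSeries.coeff k M).coeff 0 := by
  have hk := congrArg (Polynomial.eval 0) (h.X_mul_coeff_succ k)
  simp only [eval_mul, eval_add, eval_sub, eval_X, eval_C, eval_one, eval_pow, zero_mul,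
    mul_zero, zero_add, add_zero, one_mul, one_pow, ← coeff_zero_eq_eval_zero] at hk
  exact (sub_eq_zero.1 hk.symm).symm

theorem TutteEquation.coeff_eq_tuttePoly (h : TutteEquation M M₁) (k : ℕ) :
    PowerSeries.coeff k M = tuttePoly k := by
  induction k using Nat.strong_induction_on with
  | _ k ih =>
    cases k with
    | zero => rw [h.coeff_zero, tuttePoly_zero]
    | succ k =>
      have hsum : ∑ p ∈ Finset.HasAntidiagonal.antidiagonal k,
            PowerSeries.coeff p.1 M * PowerSeries.coeff p.2 M =
          ∑ p ∈ Finset.HasAntidiagonal.antidiagonal k, tuttePoly p.1 * tuttePoly p.2 := by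
        refine Finset.sum_congr rfl fun p hp => ?_
        have := Finset.HasAntidiagonal.mem_antidiagonal.1 hp
        rw [ih p.1 (by omega), ih p.2 (by omega)]
      have hdiv := divX_mul_X_add ((1 + X) * tuttePoly k)
      rw [mul_coeff_zero, coeff_add, coeff_one_zero, coeff_X_zero, add_zero, one_mul] at hdiv
      refine mul_left_cancel₀ (X_ne_zero (R := ℤ)) ?_
      rw [h.X_mul_coeff_succ, hsum, h.coeff_eq_coeff_coeff_zero, ih k k.lt_succ_self,
        tuttePoly_succ]
      linear_combination -(1 + X) * hdiv

/-- Completing the square in Tutte's equation for `M` leaves a discriminant that is a square times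
a quadratic in `1 + v`; `a` is chosen to make this factorization happen, and the root of the
quadratic factor is expressed through the power series `H`. -/
theorem tutte_equation_of_parametrization {R : Type*} [CommRing R] {z a H v M : R}
    (ha : a = 1 + 3 * z * a ^ 2)
    (hH : H = z * ((a + (1 + v) * H) * (3 * a + v * (a + (1 + v) * H))))
    (hM : M = a - z * a ^ 2 + (v - z * a * (1 + v)) * H) :
    4 * z * (1 + v) ^ 2 * v * (v * M) =
      4 * z * (1 + v) ^ 2 * v *
        (v + z * ((1 + v) ^ 2 * v * M ^ 2 + (1 + v) * ((1 + v) * M - (a - z * a ^ 3)))) := by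
  have hdiscr : (z * (1 + v) ^ 2 - v) ^ 2 -
      4 * z * (1 + v) ^ 2 * v * (v - z * (1 + v) * (a - z * a ^ 3)) =
      (v - z * a * (1 + v)) ^ 2 * (1 - 2 * z * a * (1 + v) - z * (a + 3) * (1 + v) ^ 2) := by
    grind
  have hroot : 2 * z * (1 + v) ^ 2 * v * M + z * (1 + v) ^ 2 - v =
      -(v - z * a * (1 + v)) * (1 - z * (1 + v) * (a + (1 + v) * (2 * a + 2 * v * H))) := by
    rw [hM]
    linear_combination (-z * (1 + v) ^ 2) * ha
  have hsqrt : (1 - z * (1 + v) * (a + (1 + v) * (2 * a + 2 * v * H))) ^ 2 =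
      1 - 2 * z * a * (1 + v) - z * (a + 3) * (1 + v) ^ 2 := by
    linear_combination (z * (1 + v) ^ 2) * (-3 * ha - 4 * v * hH)
  have hsquare := congrArg (· ^ 2) hroot
  simp only [mul_pow, neg_sq, hsqrt, ← hdiscr] at hsquare
  linear_combination -hsquare

/-- The series `∑ 3 ^ n * catalan n * X ^ n`. -/
noncomputable def scaledCatalan : ℤ⟦X⟧ :=
  PowerSeries.rescale 3 (PowerSeries.map (Nat.castRingHom ℤ) PowerSeries.catalanSeries)

theorem coeff_scaledCatalan (n : ℕ) :
    PowerSeries.coeff n scaledCatalan = 3 ^ n * (catalan n : ℤ) := by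
  simp [scaledCatalan]

theorem scaledCatalan_eq : scaledCatalan = 1 + 3 * PowerSeries.X * scaledCatalan ^ 2 := by
  have h := congrArg (PowerSeries.rescale (3 : ℤ) ∘ PowerSeries.map (Nat.castRingHom ℤ))
    PowerSeries.catalanSeries_sq_mul_X_add_one
  simp only [Function.comp_apply, map_add, map_mul, map_pow, map_one, PowerSeries.map_X,
    PowerSeries.rescale_X, map_ofNat] at h
  rw [← scaledCatalan] at h
  linear_combination -h

theorem exists_tutteEquation :
    ∃ M, TutteEquation M (scaledCatalan - PowerSeries.X * scaledCatalan ^ 3) := by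
  set φ : ℤ⟦X⟧ →+* ℤ[X]⟦X⟧ := PowerSeries.map Polynomial.C with hφ
  set v : ℤ[X]⟦X⟧ := PowerSeries.C X with hv
  have h1v : PowerSeries.C (1 + X : ℤ[X]) = 1 + v := by rw [map_add, map_one]
  set a := φ scaledCatalan with ha
  have hφX : φ PowerSeries.X = PowerSeries.X := PowerSeries.map_X _
  have ha' : a = 1 + 3 * PowerSeries.X * a ^ 2 := by
    have := congrArg φ scaledCatalan_eq
    rwa [map_add, map_one, map_mul, map_mul, map_pow, map_ofNat, hφX] at this
  obtain ⟨H, hH⟩ := exists_powerSeries_eq_X_mul_quadratic (a * (3 * a + v * a))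
    ((1 + v) * (3 * a + v * a) + a * v * (1 + v)) (v * (1 + v) ^ 2)
  have h1v_ne : 1 + v ≠ 0 := by
    rw [← h1v, Ne, map_eq_zero_iff _ PowerSeries.C_injective, add_comm]
    exact X_add_C_ne_zero (1 : ℤ)
  have hv_ne : v ≠ 0 := (map_ne_zero_iff _ PowerSeries.C_injective).2 X_ne_zero
  have hfactor_ne : 4 * PowerSeries.X * (1 + v) ^ 2 * v ≠ 0 := by
    have h4 : PowerSeries.C (Polynomial.C (4 : ℤ)) ≠ 0 :=
      (map_ne_zero_iff _ PowerSeries.C_injective).2 (C_ne_zero.2 four_ne_zero)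
    rw [map_ofNat, map_ofNat] at h4
    exact mul_ne_zero (mul_ne_zero (mul_ne_zero h4 PowerSeries.X_ne_zero) (pow_ne_zero 2 h1v_ne))
      hv_ne
  refine ⟨a - PowerSeries.X * a ^ 2 + (v - PowerSeries.X * a * (1 + v)) * H, ?_⟩
  rw [TutteEquation, map_mul PowerSeries.C, map_pow PowerSeries.C, h1v, ← hv, map_sub, map_mul,
    map_pow, ← hφ, hφX, ← ha]
  exact mul_left_cancel₀ hfactor_ne
    (tutte_equation_of_parametrization ha' (hH.trans (by ring)) rfl)

theorem three_mul_coeff_zero_tuttePoly (n : ℕ) :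
    3 * (tuttePoly n).coeff 0 = 4 * 3 ^ n * (catalan n : ℤ) - 3 ^ n * (catalan (n + 1) : ℤ) := by
  obtain ⟨M, hM⟩ := exists_tutteEquation
  have hrel : PowerSeries.X * ((9 : ℤ) • (scaledCatalan - PowerSeries.X * scaledCatalan ^ 3)) =
      PowerSeries.X * ((12 : ℤ) • scaledCatalan) - scaledCatalan + 1 := by
    simp only [zsmul_eq_mul]
    push_cast
    linear_combination (3 * PowerSeries.X * scaledCatalan + 1) * scaledCatalan_eq
  have hcoeff := congrArg (PowerSeries.coeff (n + 1)) hrel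
  rw [PowerSeries.coeff_succ_X_mul, map_zsmul, hM.coeff_eq_coeff_coeff_zero,
    hM.coeff_eq_tuttePoly, map_add, map_sub, PowerSeries.coeff_succ_X_mul, map_zsmul,
    coeff_scaledCatalan, coeff_scaledCatalan, PowerSeries.coeff_one, if_neg n.succ_ne_zero,
    smul_eq_mul, smul_eq_mul, pow_succ] at hcoeff
  linarith

theorem succ_mul_catalan_mul_factorial_mul_factorial (n : ℕ) :
    (n + 1) * catalan n * n.factorial * n.factorial = (2 * n).factorial := by
  rw [succ_mul_catalan_eq_centralBinom, Nat.centralBinom, two_mul,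
    Nat.add_choose_mul_factorial_mul_factorial]

theorem coeff_zero_tuttePoly_mul (n : ℕ) :
    (tuttePoly n).coeff 0 * ((n + 2).factorial * n.factorial : ℕ) =
      (2 * 3 ^ n * (2 * n).factorial : ℕ) := by
  have hcat := succ_mul_catalan_mul_factorial_mul_factorial n
  have hcat' := succ_mul_catalan_mul_factorial_mul_factorial (n + 1)
  rw [show 2 * (n + 1) = 2 * n + 1 + 1 by ring, Nat.factorial_succ (2 * n + 1),
    Nat.factorial_succ (2 * n), Nat.factorial_succ n] at hcat'
  rw [Nat.factorial_succ (n + 1), Nat.factorial_succ n]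
  zify at hcat hcat' ⊢
  have hn : (3 * (n + 1) : ℤ) ≠ 0 := by positivity
  refine mul_left_cancel₀ hn ?_
  linear_combination
    ((n : ℤ) + 1) * ((n + 1 + 1) * ((n + 1) * n.factorial) * n.factorial) *
        three_mul_coeff_zero_tuttePoly n +
      4 * 3 ^ n * ((n : ℤ) + 1) * (n + 2) * hcat - 3 ^ n * hcat'

end TutteEquation

/-! ### Counting rooted maps -/

section Counting

variable {n : ℕ}

theorem numCycles_eq_orbitCount {m : ℕ} (f : Perm (Fin m)) : numCycles f = orbitCount {f} := by
  have hcount := orbitCount_singleton_add_sum_cycleType f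
  have hle := f.support.card_le_univ
  rw [← sum_cycleType, Fintype.card_fin] at hle
  rw [Fintype.card_fin] at hcount
  rw [numCycles]
  omega

theorem isPlanar_iff_numCycles {σ α : Perm (Fin (2 * n))} (hα : Function.Involutive α)
    (hfix : Function.fixedPoints α = ∅) :
    IsPlanar σ α ↔ orbitCount {σ, α} = 1 ∧ numCycles σ + numCycles (σ * α) = n + 2 := by
  have hedges := two_mul_orbitCount_of_involutive hα
  rw [hfix, Set.ncard_empty, Nat.card_fin] at hedges
  rw [numCycles_eq_orbitCount, numCycles_eq_orbitCount]
  exact ⟨fun ⟨h, h'⟩ => ⟨h, by rw [Nat.card_fin] at h'; omega⟩,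
    fun ⟨h, _⟩ => ⟨h, by rw [Nat.card_fin]; omega⟩⟩

theorem fixedPoints_eq_empty_iff {X : Type*} {f : X → X} :
    Function.fixedPoints f = ∅ ↔ ∀ x, f x ≠ x :=
  Set.eq_empty_iff_forall_notMem

/-- A rooted map consists of a planar map without legs and an arbitrary root dart. -/
def rmapEquiv : RMap n ≃ planarMaps (∅ : Set (Fin (2 * n))) × Fin (2 * n) where
  toFun M :=
    have hfix := fixedPoints_eq_empty_iff.2 M.fpf
    have : Nonempty (Fin (2 * n)) := ⟨M.root⟩
    (⟨(M.σ, M.α), (isPlanar_iff_numCycles M.inv hfix).2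
      ⟨orbitCount_eq_one_iff_forall_exists.2 M.conn, M.euler⟩, M.inv, hfix⟩, M.root)
  invFun q :=
    have h := (isPlanar_iff_numCycles q.1.2.2.1 q.1.2.2.2).1 q.1.2.1
    have : Nonempty (Fin (2 * n)) := ⟨q.2⟩
    { σ := q.1.1.1
      α := q.1.1.2
      root := q.2
      inv := q.1.2.2.1
      fpf := fixedPoints_eq_empty_iff.1 q.1.2.2.2
      conn := orbitCount_eq_one_iff_forall_exists.1 h.1
      euler := h.2 }

theorem natCard_rmap :
    Nat.card (RMap n) = (planarMaps (∅ : Set (Fin (2 * n)))).ncard * (2 * n) := by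
  rw [Nat.card_congr rmapEquiv, Nat.card_prod, Nat.card_fin, Nat.card_coe_set_eq]

/-- Permutations act on rooted maps by relabelling the darts. -/
instance : MulAction (Perm (Fin (2 * n))) (RMap n) where
  smul e M := rmapEquiv.symm
    (⟨(e.permCongr M.σ, e.permCongr M.α), by
      rw [← Set.image_empty e]
      exact (permCongr_mem_planarMaps e (p := (M.σ, M.α))).2 (rmapEquiv M).1.2⟩, e M.root)
  one_smul _ := rfl
  mul_smul _ _ _ := rfl

theorem smul_eq_iff {e : Perm (Fin (2 * n))} {M M' : RMap n} :
    e • M = M' ↔ (∀ d, e (M.σ d) = M'.σ (e d)) ∧ (∀ d, e (M.α d) = M'.α (e d)) ∧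
      e M.root = M'.root := by
  have hperm (f f' : Perm (Fin (2 * n))) : e.permCongr f = f' ↔ ∀ d, e (f d) = f' (e d) := by
    rw [Perm.ext_iff, ← e.forall_congr_right]
    simp
  rw [← rmapEquiv.apply_eq_iff_eq, Prod.ext_iff, Subtype.ext_iff, Prod.ext_iff, and_assoc,
    ← hperm, ← hperm]
  rfl

theorem stabilizer_eq_bot (M : RMap n) : MulAction.stabilizer (Perm (Fin (2 * n))) M = ⊥ := by
  refine (Subgroup.eq_bot_iff_forall _).2 fun e he => ?_
  obtain ⟨hσ, hα, hroot⟩ := smul_eq_iff.1 (MulAction.mem_stabilizer_iff.1 he)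
  have hstable : IsStable {M.σ, M.α} (Function.fixedPoints e) :=
    isStable_pair.2 ⟨isStable_singleton_of_mapsTo fun d hd => (hσ d).trans (congrArg _ hd),
      isStable_singleton_of_mapsTo fun d hd => (hα d).trans (congrArg _ hd)⟩
  have huniv := hstable.eq_univ_of_orbitCount_eq_one (rmapEquiv M).1.2.1.connected hroot
  exact Perm.ext fun d => huniv.ge (Set.mem_univ d)

theorem natCard_quot_rmapIso_mul :
    Nat.card (Quot (@RMapIso n)) * (2 * n).factorial = Nat.card (RMap n) := by
  let e := MulAction.selfEquivOrbitsQuotientProd (stabilizer_eq_bot (n := n))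
  have hquot : Nat.card (Quot (@RMapIso n)) =
      Nat.card (MulAction.orbitRel.Quotient (Perm (Fin (2 * n))) (RMap n)) :=
    Nat.card_congr (Quot.congrRight fun M M' => (exists_congr fun _ => smul_eq_iff.symm).trans
      (MulAction.orbitRel_apply.trans MulAction.mem_orbit_symm).symm)
  rw [Nat.card_congr e, Nat.card_prod, hquot, Nat.card_perm, Nat.card_fin]

theorem coeff_zero_weightSum {D : Type*} [Finite D] (s : D) (A : Set (Perm D × Perm D)) :
    (weightSum s A).coeff 0 = A.ncard := by
  rw [weightSum, finsum_mem_eq_finite_toFinset_sum _ A.toFinite, Polynomial.finsetSum_coeff,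
    Set.ncard_eq_toFinset_card A A.toFinite]
  simp [Polynomial.coeff_zero_eq_eval_zero]

theorem mapCount_eq_coeff_zero_tuttePoly (n : ℕ) : (mapCount n : ℤ) = (tuttePoly n).coeff 0 := by
  cases n with
  | zero => simp [mapCount, tuttePoly_zero]
  | succ n =>
    have hquot := natCard_quot_rmapIso_mul (n := n + 1)
    have hcoeff := coeff_zero_weightSum (0 : Fin (2 * (n + 1))) (planarMaps ∅)
    rw [weightSum_planarMaps_empty_eq_tuttePoly (Nat.card_fin _), Polynomial.coeff_smul,
      nsmul_eq_mul] at hcoeff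
    rw [natCard_rmap] at hquot
    rw [mapCount, if_neg n.succ_ne_zero]
    refine mul_right_cancel₀ (b := ((2 * (n + 1)).factorial : ℤ)) (by positivity) ?_
    rw [← Nat.cast_mul, hquot, Nat.cast_mul, ← hcoeff, Nat.mul_succ, Nat.factorial_succ (2 * n + 1)]
    push_cast
    ring

end Counting

end PlanarMap

/-- **Tutte.** The number of rooted planar maps with `n` edges is
`M_n = 2 · 3^n · (2n)! / ((n+2)! · n!)`. -/
theorem tutte_map_count (n : ℕ) :
    mapCount n * (Nat.factorial (n + 2) * Nat.factorial n) =
      2 * 3 ^ n * Nat.factorial (2 * n) := by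
  have h := PlanarMap.coeff_zero_tuttePoly_mul n
  rw [← PlanarMap.mapCount_eq_coeff_zero_tuttePoly] at h
  exact_mod_cast h
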